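/- arXiv:2009.08035 — 2 statements merged into one kernel-verified Lean document; each statement's English description precedes it below -/
import Mathlib

section
/- Let n and d be positive integers with gcd(n,d) = 1, let r be an integer, and let a, b, c be indeterminates. Let m satisfy 0 ≤ m ≤ n−1 and d·m ≡ −r (mod n). Then the sum over k from 0 to m of [2dk+r] · (aq^r, q^r/a, bq^r, q^r/b, q^r/c, q^r; q^d)_k / (aq^d, q^d/a, bq^d, q^d/b, cq^d, q^d; q^d)_k · (c·q^{2d−3r})^k is congruent to 0 modulo [n] = (1−q^n)/(1−q), i.e., the numerator of this rational function in q, a, b, c is divisible by [n]. -/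
open Finset

noncomputable section

/-- Polynomial ring in the variables `q, a, b, c` (indices `0,1,2,3`). -/
abbrev R : Type := MvPolynomial (Fin 4) ℚ

/-- Field of rational functions in `q, a, b, c`. -/
abbrev K : Type := FractionRing R

def qv : K := algebraMap R K (MvPolynomial.X 0)
def av : K := algebraMap R K (MvPolynomial.X 1)
def bv : K := algebraMap R K (MvPolynomial.X 2)
def cv : K := algebraMap R K (MvPolynomial.X 3)

/-- The q-shifted factorial `(x; Q)_k = (1-x)(1-xQ)⋯(1-xQ^{k-1})`. -/
def poch (x Q : K) (k : ℕ) : K := ∏ i ∈ Finset.range k, (1 - x * Q ^ i)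

/-- The q-integer `[m] = (1-q^m)/(1-q)` (allowing integer `m`). -/
def qint (m : ℤ) : K := (1 - qv ^ m) / (1 - qv)

/-- The n-th cyclotomic polynomial, as a polynomial in the variable `q`. -/
def Phi (n : ℕ) : R :=
  Polynomial.eval₂ MvPolynomial.C (MvPolynomial.X 0) (Polynomial.cyclotomic n ℚ)

/-- `[n] = 1 + q + ⋯ + q^{n-1}` as a polynomial in `q`. -/
def qintR (n : ℕ) : R := ∑ i ∈ Finset.range n, (MvPolynomial.X 0 : R) ^ i

/-- `x ≡ 0 (mod M)` as rational functions: `x = M·f/g` where `g` shares no prime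
factor with `M` (i.e. the numerator of `x` in lowest terms is divisible by `M`). -/
def modCong (M : R) (x : K) : Prop :=
  ∃ f g : R, g ≠ 0 ∧ (∀ p : R, Prime p → p ∣ M → ¬ p ∣ g) ∧
    x * algebraMap R K g = algebraMap R K (M * f)

section algebraPart

variable {F : Type*} [Field F]

def hD (a b c p : F) : F := (1 - a * p) * (1 - p / a) * (1 - b * p) * (1 - p / b) * (1 - c * p) * (1 - p)

def hF (a b c X Q w y : F) : F :=
  ((1 - a * X * y) * (1 - X / a * y) * (1 - b * X * y) * (1 - X / b * y) * (1 - X / c * y) *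
    (1 - X * y)) /
  ((1 - a * Q * y) * (1 - Q / a * y) * (1 - b * Q * y) * (1 - Q / b * y) * (1 - c * Q * y) *
    (1 - Q * y)) * (c * w)

lemma hF_eq (a b c X Q w y s : F) (ha : a ≠ 0) (hb : b ≠ 0) (hc : c ≠ 0) (hs : s ≠ 0)
    (h : X * y = s⁻¹) :
    hF a b c X Q w y = w * s⁻¹ ^ 6 * hD a b c s / hD a b c (Q * y) := by
  have e1 : ((1 - a * X * y) * (1 - X / a * y) * (1 - b * X * y) * (1 - X / b * y) *
      (1 - X / c * y) * (1 - X * y)) * c = s⁻¹ ^ 6 * hD a b c s := by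
    have : ((1 - a * X * y) * (1 - X / a * y) * (1 - b * X * y) * (1 - X / b * y) *
      (1 - X / c * y) * (1 - X * y)) = ((1 - a * (X * y)) * (1 - (X * y) / a) * (1 - b * (X * y)) *
        (1 - (X * y) / b) * (1 - (X * y) / c) * (1 - X * y)) := by ring
    rw [this, h, hD]
    field_simp
    ring
  have e2 : ((1 - a * Q * y) * (1 - Q / a * y) * (1 - b * Q * y) * (1 - Q / b * y) *
      (1 - c * Q * y) * (1 - Q * y)) = hD a b c (Q * y) := by
    rw [hD]; ring
  rw [hF, e2, div_mul_eq_mul_div, ← mul_assoc, e1]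
  ring

lemma prod_pow_sq (Q : F) (M : ℕ) : (∏ i ∈ range M, Q ^ (i + 1)) ^ 2 = Q ^ (M * (M + 1)) := by
  induction M with
  | zero => simp
  | succ M ih =>
    rw [prod_range_succ, mul_pow, ih, ← pow_mul, ← pow_add]
    congr 1; ring

lemma sum_zero [CharZero F] (a b c X Q w : F) (M : ℕ) (ha : a ≠ 0) (hb : b ≠ 0) (hc : c ≠ 0)
    (hQ : Q ≠ 0) (hX : X = (Q ^ M)⁻¹) (hw : w = Q ^ (2 + 3 * M))
    (hE : ∀ j < M, hD a b c (Q ^ (j + 1)) ≠ 0) :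
    ∑ t ∈ range (M + 1), (1 - X * (Q ^ t) ^ 2) * ∏ i ∈ range t, hF a b c X Q w (Q ^ i) = 0 := by
  set E : ℕ → F := fun j => hD a b c (Q ^ j) with hEdef
  set G : ℕ → F := fun i => hF a b c X Q w (Q ^ i) with hGdef
  set P : ℕ → F := fun t => ∏ i ∈ range t, G i with hP
  have hG : ∀ i j, i + j = M → G i = w * (Q ^ j)⁻¹ ^ 6 * E j / E (i + 1) := by
    intro i j hij
    have := hF_eq a b c X Q w (Q ^ i) (Q ^ j) ha hb hc (pow_ne_zero _ hQ) (by
      rw [hX, ← hij, pow_add]; field_simp)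
    simp only [hGdef, this, hEdef, pow_succ']
  have hE' : ∀ j, 1 ≤ j → j ≤ M → E j ≠ 0 := by
    intro j h1 h2
    have := hE (j - 1) (by omega)
    rwa [Nat.sub_add_cancel h1] at this
  have hGG : ∀ i j, i + j + 1 = M → G i * G j * Q ^ 2 = 1 := by
    intro i j hij
    rw [hG i (j + 1) (by omega), hG j (i + 1) (by omega), hw]
    have h1 := hE' (i + 1) (by omega) (by omega)
    have h2 := hE' (j + 1) (by omega) (by omega)
    rw [← hij]
    field_simp
    ring
  have hPM : P M * Q ^ M = 1 := by
    have hprod : ∏ i ∈ range M, E (i + 1) ≠ 0 := by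
      rw [prod_ne_zero_iff]; intro i hi; exact hE i (mem_range.1 hi)
    have hrefl : ∀ f : ℕ → F, ∏ i ∈ range M, f (M - i) = ∏ i ∈ range M, f (i + 1) := by
      intro f
      rw [← prod_range_reflect (fun i => f (i + 1))]
      apply prod_congr rfl
      intro i hi
      have := mem_range.1 hi
      congr 1; omega
    have : P M = ∏ i ∈ range M, (w * (Q ^ (M - i))⁻¹ ^ 6 * E (M - i) / E (i + 1)) := by
      apply prod_congr rfl
      intro i hi
      exact hG i (M - i) (by have := mem_range.1 hi; omega)
    rw [this, prod_div_distrib,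
      prod_mul_distrib (f := fun i => w * (Q ^ (M - i))⁻¹ ^ 6), hrefl E, mul_div_cancel_right₀ _ hprod,
      prod_mul_distrib, prod_const, card_range,
      hrefl (fun j => (Q ^ j)⁻¹ ^ 6), prod_pow, prod_inv_distrib,
      show ∀ z : F, z⁻¹ ^ 6 = ((z ^ 2)⁻¹) ^ 3 from fun z => by rw [inv_pow, inv_pow, ← pow_mul],
      prod_pow_sq, hw]
    field_simp
    ring
  have hPt : ∀ t s, t + s = M → P s * Q ^ s = Q ^ t * P t := by
    intro t
    induction t with
    | zero => intro s hs; obtain rfl : s = M := by omega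
              simp [hP] at hPM ⊢; exact hPM
    | succ t ih =>
      intro s hs
      have h1 := ih (s + 1) (by omega)
      have h2 := hGG t s (by omega)
      have e1 : P (s + 1) = P s * G s := prod_range_succ _ _
      have e2 : P (t + 1) = P t * G t := prod_range_succ _ _
      rw [e1] at h1
      rw [e2]
      have : P s * Q ^ s * (G t * G s * Q ^ 2) = Q ^ (t + 1) * (P t * G t) := by
        have : P s * Q ^ s * (G t * G s * Q ^ 2) = (P s * G s * Q ^ (s + 1)) * (G t * Q) := by ring
        rw [this, h1]; ring
      rw [← this, h2, mul_one]
  have hanti : ∀ t ∈ range (M + 1), (1 - X * (Q ^ (M + 1 - 1 - t)) ^ 2) * P (M + 1 - 1 - t)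
      = - ((1 - X * (Q ^ t) ^ 2) * P t) := by
    intro t ht
    have ht := mem_range.1 ht
    obtain ⟨s, hs⟩ : ∃ s, t + s = M := ⟨M - t, by omega⟩
    have e : M + 1 - 1 - t = s := by omega
    rw [e]
    have h := hPt t s hs
    have hPs : P s = Q ^ t * P t / Q ^ s := by rw [← h]; field_simp
    rw [hPs, hX, ← hs, pow_add]
    field_simp
    ring
  have := sum_range_reflect (fun t => (1 - X * (Q ^ t) ^ 2) * P t) (M + 1)
  rw [sum_congr rfl hanti, sum_neg_distrib] at this
  exact self_eq_neg.1 this.symm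

end algebraPart
section valuePart

variable {L : Type*} [Field L] (φ : R →+* L)

/-- `x` is regular at the kernel of `φ` with residue value `y`. -/
def V (x : K) (y : L) : Prop :=
  ∃ f g : R, φ g ≠ 0 ∧ x * algebraMap R K g = algebraMap R K f ∧ y * φ g = φ f

variable {φ}

lemma V.of (p : R) : V φ (algebraMap R K p) (φ p) := ⟨p, 1, by simp, by simp, by simp⟩

lemma V.one : V φ 1 1 := ⟨1, 1, by simp, by simp, by simp⟩

lemma V.zero : V φ 0 0 := ⟨0, 1, by simp, by simp, by simp⟩

lemma V.add {x x' : K} {y y' : L} (h : V φ x y) (h' : V φ x' y') : V φ (x + x') (y + y') := by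
  obtain ⟨f, g, h1, h2, h3⟩ := h
  obtain ⟨f', g', h1', h2', h3'⟩ := h'
  refine ⟨f * g' + f' * g, g * g', by simp [h1, h1'], ?_, ?_⟩
  · simp only [map_mul, map_add, ← h2, ← h2']; ring
  · simp only [map_mul, map_add, ← h3, ← h3']; ring

lemma V.mul {x x' : K} {y y' : L} (h : V φ x y) (h' : V φ x' y') : V φ (x * x') (y * y') := by
  obtain ⟨f, g, h1, h2, h3⟩ := h
  obtain ⟨f', g', h1', h2', h3'⟩ := h'
  refine ⟨f * f', g * g', by simp [h1, h1'], ?_, ?_⟩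
  · simp only [map_mul, ← h2, ← h2']; ring
  · simp only [map_mul, ← h3, ← h3']; ring

lemma V.neg {x : K} {y : L} (h : V φ x y) : V φ (-x) (-y) := by
  obtain ⟨f, g, h1, h2, h3⟩ := h
  exact ⟨-f, g, h1, by simp [h2], by simp [h3]⟩

lemma V.sub {x x' : K} {y y' : L} (h : V φ x y) (h' : V φ x' y') : V φ (x - x') (y - y') := by
  rw [sub_eq_add_neg, sub_eq_add_neg]; exact h.add h'.neg

lemma V.ne_zero {x : K} {y : L} (h : V φ x y) (hy : y ≠ 0) : x ≠ 0 := by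
  rintro rfl
  obtain ⟨f, g, h1, h2, h3⟩ := h
  rw [zero_mul] at h2
  have : f = 0 := by
    apply IsFractionRing.injective R K; rw [← h2, map_zero]
  rw [this, map_zero] at h3
  exact mul_ne_zero hy h1 h3

lemma V.inv {x : K} {y : L} (h : V φ x y) (hy : y ≠ 0) : V φ x⁻¹ y⁻¹ := by
  have hx := h.ne_zero hy
  obtain ⟨f, g, h1, h2, h3⟩ := h
  refine ⟨g, f, ?_, ?_, ?_⟩
  · rw [← h3]; exact mul_ne_zero hy h1
  · rw [← h2]; field_simp
  · rw [← h3]; field_simp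

lemma V.div {x x' : K} {y y' : L} (h : V φ x y) (h' : V φ x' y') (hy : y' ≠ 0) :
    V φ (x / x') (y / y') := by
  rw [div_eq_mul_inv, div_eq_mul_inv]; exact h.mul (h'.inv hy)

lemma V.pow {x : K} {y : L} (h : V φ x y) (k : ℕ) : V φ (x ^ k) (y ^ k) := by
  induction k with
  | zero => simpa using V.one
  | succ k ih => rw [pow_succ, pow_succ]; exact ih.mul h

lemma V.zpow {x : K} {y : L} (h : V φ x y) (hy : y ≠ 0) (k : ℤ) : V φ (x ^ k) (y ^ k) := by
  cases k with
  | ofNat k => simpa using h.pow k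
  | negSucc k =>
    rw [zpow_negSucc, zpow_negSucc]; exact (h.pow _).inv (pow_ne_zero _ hy)

lemma V.prod {ι : Type*} (s : Finset ι) {x : ι → K} {y : ι → L} (h : ∀ i ∈ s, V φ (x i) (y i)) :
    V φ (∏ i ∈ s, x i) (∏ i ∈ s, y i) := by
  classical
  induction s using Finset.induction_on with
  | empty => simpa using V.one
  | insert i s hi ih =>
    rw [prod_insert hi, prod_insert hi]
    exact (h i (mem_insert_self _ _)).mul (ih fun j hj => h j (mem_insert_of_mem hj))

lemma V.sum {ι : Type*} (s : Finset ι) {x : ι → K} {y : ι → L} (h : ∀ i ∈ s, V φ (x i) (y i)) :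
    V φ (∑ i ∈ s, x i) (∑ i ∈ s, y i) := by
  classical
  induction s using Finset.induction_on with
  | empty => simpa using V.zero
  | insert i s hi ih =>
    rw [sum_insert hi, sum_insert hi]
    exact (h i (mem_insert_self _ _)).add (ih fun j hj => h j (mem_insert_of_mem hj))

/-- ratio `(1 - y^B)/(1 - y)` where `y` reduces to `1` -/
lemma V.geom {y : K} (hy : V φ y 1) (hy1 : y ≠ 1) (B : ℕ) : V φ ((1 - y ^ B) / (1 - y)) (B : L) := by
  have : (1 - y ^ B) / (1 - y) = ∑ i ∈ range B, y ^ i := by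
    rw [← mul_neg_geom_sum, mul_div_cancel_left₀]
    exact sub_ne_zero.2 hy1.symm
  rw [this]
  have h := V.sum (φ := φ) (range B) (x := fun i => y ^ i) (y := fun i => 1)
    (fun i _ => by simpa using hy.pow i)
  simpa using h

lemma V.geomZ {y : K} (hy : V φ y 1) (hy1 : y ≠ 1) (A : ℤ) :
    ∃ z : L, V φ ((1 - y ^ A) / (1 - y)) z := by
  have hy0 := hy.ne_zero one_ne_zero
  obtain ⟨B, rfl | rfl⟩ := A.eq_nat_or_neg
  · exact ⟨_, by simpa using hy.geom hy1 B⟩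
  · have := (((hy.zpow one_ne_zero (-(B : ℤ))).mul (hy.geom hy1 B))).neg
    refine ⟨-(1 ^ (-(B : ℤ)) * (B : L)), ?_⟩
    convert this using 1
    rw [zpow_neg, zpow_natCast]
    field_simp
    ring

def hA {F : Type*} [Field F] (a b c X Q w y : F) : F :=
  ((1 - a * X * y) * (1 - X / a * y) * (1 - b * X * y) * (1 - X / b * y) * (1 - X / c * y)) /
  ((1 - a * Q * y) * (1 - Q / a * y) * (1 - b * Q * y) * (1 - Q / b * y) * (1 - c * Q * y)) * (c * w)

lemma hF_hA {F : Type*} [Field F] (a b c X Q w y : F) :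
    hF a b c X Q w y = hA a b c X Q w y * ((1 - X * y) / (1 - Q * y)) := by
  rw [hF, hA, mul_div_mul_comm]; ring

lemma V.hA {a b c X Q w y : K} {a' b' c' X' Q' w' y' : L} (ha : V φ a a') (hb : V φ b b')
    (hc : V φ c c') (hX : V φ X X') (hQ : V φ Q Q') (hw : V φ w w') (hy : V φ y y')
    (ha0 : a' ≠ 0) (hb0 : b' ≠ 0) (hc0 : c' ≠ 0)
    (h1 : 1 - a' * Q' * y' ≠ 0) (h2 : 1 - Q' / a' * y' ≠ 0) (h3 : 1 - b' * Q' * y' ≠ 0)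
    (h4 : 1 - Q' / b' * y' ≠ 0) (h5 : 1 - c' * Q' * y' ≠ 0) :
    V φ (hA a b c X Q w y) (hA a' b' c' X' Q' w' y') := by
  unfold _root_.hA
  refine V.mul (V.div ?_ ?_ ?_) (hc.mul hw)
  · exact ((((V.one.sub ((ha.mul hX).mul hy)).mul (V.one.sub ((hX.div ha ha0).mul hy))).mul
      (V.one.sub ((hb.mul hX).mul hy))).mul (V.one.sub ((hX.div hb hb0).mul hy))).mul
      (V.one.sub ((hX.div hc hc0).mul hy))
  · exact ((((V.one.sub ((ha.mul hQ).mul hy)).mul (V.one.sub ((hQ.div ha ha0).mul hy))).mul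
      (V.one.sub ((hb.mul hQ).mul hy))).mul (V.one.sub ((hQ.div hb hb0).mul hy))).mul
      (V.one.sub ((hc.mul hQ).mul hy))
  · simp [h1, h2, h3, h4, h5]

lemma core [CharZero L] (e d m : ℕ) (r : ℤ) (he : 1 < e) (hed : Nat.Coprime d e) (hd : 0 < d)
    (hdvd : (e : ℤ) ∣ d * m + r)
    (hζ : IsPrimitiveRoot (φ (MvPolynomial.X 0)) e)
    (ha0 : φ (MvPolynomial.X 1) ≠ 0) (hb0 : φ (MvPolynomial.X 2) ≠ 0)
    (hc0 : φ (MvPolynomial.X 3) ≠ 0)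
    (ha1 : φ (MvPolynomial.X 1) ^ e ≠ 1) (hb1 : φ (MvPolynomial.X 2) ^ e ≠ 1)
    (hc1 : φ (MvPolynomial.X 3) ^ e ≠ 1) (hq : ∀ j : ℕ, 0 < j → qv ^ j ≠ 1) :
    V φ (∑ k ∈ range (m + 1), qint (2 * d * k + r) *
      ∏ i ∈ range k, hF av bv cv (qv ^ r) (qv ^ (d : ℤ)) (qv ^ (2 * d - 3 * r)) ((qv ^ (d : ℤ)) ^ i))
      0 := by
  set ζ := φ (MvPolynomial.X 0) with hζdef
  set a := φ (MvPolynomial.X 1) with hadef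
  set b := φ (MvPolynomial.X 2) with hbdef
  set c := φ (MvPolynomial.X 3) with hcdef
  have hζ0 : ζ ≠ 0 := hζ.ne_zero (by omega)
  have Va : V φ av a := V.of _
  have Vb : V φ bv b := V.of _
  have Vc : V φ cv c := V.of _
  have Vq : V φ qv ζ := V.of _
  have hq0 : qv ≠ 0 := Vq.ne_zero hζ0
  set M := m % e with hM
  have hMe : M < e := Nat.mod_lt _ (by omega)
  set s := m / e with hs
  have hms : e * s + M = m := Nat.div_add_mod m e
  set Q := ζ ^ (d : ℤ) with hQdef
  set X := ζ ^ r with hXdef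
  set w := ζ ^ (2 * d - 3 * r) with hwdef
  have VQ : V φ (qv ^ (d : ℤ)) Q := Vq.zpow hζ0 _
  have VX : V φ (qv ^ r) X := Vq.zpow hζ0 _
  have Vw : V φ (qv ^ (2 * d - 3 * r)) w := Vq.zpow hζ0 _
  have hQp : IsPrimitiveRoot Q e := by
    rw [hQdef, zpow_natCast]; exact hζ.pow_of_coprime d hed
  have hQ0 : Q ≠ 0 := hQp.ne_zero (by omega)
  have hQe : Q ^ e = 1 := hQp.pow_eq_one
  have hdvd' : (e : ℤ) ∣ r + d * M := by
    have : (r : ℤ) + d * M = (d * m + r) - e * (d * s) := by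
      rw [← hms]; push_cast; ring
    rw [this]; exact dvd_sub hdvd (dvd_mul_right _ _)
  have hXM : X * Q ^ M = 1 := by
    have : X * Q ^ M = ζ ^ (r + d * M) := by
      rw [hXdef, hQdef, ← zpow_natCast, ← zpow_mul, ← zpow_add₀ hζ0]
    rw [this]; exact (hζ.zpow_eq_one_iff_dvd _).2 hdvd'
  have hXeq : X = (Q ^ M)⁻¹ := eq_inv_of_mul_eq_one_left hXM
  have hweq : w = Q ^ (2 + 3 * M) := by
    have h1 : w * X ^ 3 = Q ^ 2 := by
      rw [hwdef, hXdef, hQdef, ← zpow_natCast, ← zpow_natCast, ← zpow_mul, ← zpow_mul,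
        ← zpow_add₀ hζ0]
      congr 1; push_cast; ring
    calc w = w * (X * Q ^ M) ^ 3 := by rw [hXM]; ring
      _ = (w * X ^ 3) * Q ^ (3 * M) := by ring
      _ = _ := by rw [h1, ← pow_add]
  -- nonvanishing
  have nv1 : ∀ x : L, x ^ e ≠ 1 → ∀ p : L, p ^ e = 1 → 1 - x * p ≠ 0 := by
    intro x hx p hp h
    apply hx
    have : x * p = 1 := (sub_eq_zero.1 h).symm
    rw [← one_pow e, ← this, mul_pow, hp, mul_one]
  have nv2 : ∀ x : L, x ≠ 0 → x ^ e ≠ 1 → ∀ p : L, p ^ e = 1 → 1 - p / x ≠ 0 := by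
    intro x hx0 hx p hp h
    apply hx
    have : p / x = 1 := (sub_eq_zero.1 h).symm
    rw [div_eq_one_iff_eq hx0] at this
    rw [← this, hp]
  have hQpow : ∀ j, (Q ^ j) ^ e = 1 := fun j => by rw [← pow_mul, mul_comm, pow_mul, hQe, one_pow]
  have nvQ : ∀ j, 0 < j → j < e → 1 - Q ^ j ≠ 0 := by
    intro j h1 h2 h
    exact hQp.pow_ne_one_of_pos_of_lt h1.ne' h2 (sub_eq_zero.1 h).symm
  have hDne : ∀ j < M, hD a b c (Q ^ (j + 1)) ≠ 0 := by
    intro j hj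
    unfold hD
    have := nv1 a ha1 _ (hQpow (j + 1))
    have := nv2 a ha0 ha1 _ (hQpow (j + 1))
    have := nv1 b hb1 _ (hQpow (j + 1))
    have := nv2 b hb0 hb1 _ (hQpow (j + 1))
    have := nv1 c hc1 _ (hQpow (j + 1))
    have := nvQ (j + 1) (by omega) (by omega)
    simp only [ne_eq, mul_eq_zero, not_or]
    tauto
  have hsum := sum_zero a b c X Q w M ha0 hb0 hc0 hQ0 hXeq hweq hDne
  set G : ℕ → L := fun i => hF a b c X Q w (Q ^ i) with hG
  set Fk : ℕ → K := fun i =>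
    hF av bv cv (qv ^ r) (qv ^ (d : ℤ)) (qv ^ (2 * d - 3 * r)) ((qv ^ (d : ℤ)) ^ i) with hFk
  have VQs : ∀ l i, V φ ((qv ^ (d : ℤ)) ^ (e * l + i)) (Q ^ i) := by
    intro l i
    have := VQ.pow (e * l + i)
    rwa [pow_add Q, pow_mul Q, hQe, one_pow, one_mul] at this
  have VA : ∀ l i, V φ (hA av bv cv (qv ^ r) (qv ^ (d : ℤ)) (qv ^ (2 * d - 3 * r))
      ((qv ^ (d : ℤ)) ^ (e * l + i))) (hA a b c X Q w (Q ^ i)) := by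
    intro l i
    have h := hQpow (i + 1)
    rw [pow_succ'] at h
    refine V.hA Va Vb Vc VX VQ Vw (VQs l i) ha0 hb0 hc0 ?_ ?_ ?_ ?_ ?_
    · rw [mul_assoc]; exact nv1 a ha1 _ h
    · rw [div_mul_eq_mul_div]; exact nv2 a ha0 ha1 _ h
    · rw [mul_assoc]; exact nv1 b hb1 _ h
    · rw [div_mul_eq_mul_div]; exact nv2 b hb0 hb1 _ h
    · rw [mul_assoc]; exact nv1 c hc1 _ h
  have VN : ∀ l i, V φ (1 - qv ^ r * (qv ^ (d : ℤ)) ^ (e * l + i)) (1 - X * Q ^ i) :=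
    fun l i => V.one.sub (VX.mul (VQs l i))
  have VDn : ∀ l i, V φ (1 - qv ^ (d : ℤ) * (qv ^ (d : ℤ)) ^ (e * l + i)) (1 - Q ^ (i + 1)) :=
    fun l i => by rw [pow_succ']; exact V.one.sub (VQ.mul (VQs l i))
  have VF : ∀ l i, i + 1 < e → V φ (Fk (e * l + i)) (G i) := by
    intro l i hi
    simp only [hFk, hG, hF_hA]
    refine (VA l i).mul ((VN l i).div ?_ ?_)
    · rw [← pow_succ' Q]; exact VDn l i
    · rw [← pow_succ']; exact nvQ _ (by omega) hi
  -- block products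
  have Vblock : ∀ l, ∃ z, V φ (∏ i ∈ range e, Fk (e * l + i)) z := by
    intro l
    have hqe : qv ^ e ≠ 1 := hq e (by omega)
    have Vqe : V φ (qv ^ e) 1 := by
      have := Vq.pow e
      rwa [hζ.pow_eq_one] at this
    set y := qv ^ e with hy
    have hy1 : 1 - y ≠ 0 := sub_ne_zero.2 hqe.symm
    obtain ⟨A, hAeq⟩ := hdvd'
    have hNM : 1 - qv ^ r * (qv ^ (d : ℤ)) ^ (e * l + M) = 1 - y ^ (A + d * l) := by
      rw [hy, ← zpow_natCast, ← zpow_natCast, ← zpow_mul, ← zpow_mul, ← zpow_add₀ hq0]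
      congr 2
      push_cast
      linear_combination hAeq
    have hDe : 1 - qv ^ (d : ℤ) * (qv ^ (d : ℤ)) ^ (e * l + (e - 1)) = 1 - y ^ (d * (l + 1)) := by
      rw [hy, ← pow_succ', zpow_natCast, ← pow_mul, ← pow_mul]
      congr 2
      have : e * l + (e - 1) + 1 = e * (l + 1) := by rw [mul_add]; omega
      rw [this]; ring
    obtain ⟨z1, hz1⟩ := Vqe.geomZ hqe (A + d * l)
    have hz2 := Vqe.geom hqe (d * (l + 1))
    have hz2n : ((d * (l + 1) : ℕ) : L) ≠ 0 := by
      rw [Nat.cast_ne_zero]; positivity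
    have V1 := V.prod (φ := φ) (range e) (fun i _ => VA l i)
    have V2 := V.prod (φ := φ) ((range e).erase M) (fun i _ => VN l i)
    have V3 := V.prod (φ := φ) (range (e - 1)) (fun i _ => VDn l i)
    have V3n : ∏ i ∈ range (e - 1), (1 - Q ^ (i + 1)) ≠ 0 := by
      rw [prod_ne_zero_iff]; intro i hi
      have := mem_range.1 hi
      exact nvQ _ (by omega) (by omega)
    have Vall := V1.mul ((hz1.mul V2).div (V3.mul hz2) (mul_ne_zero V3n hz2n))
    obtain ⟨zz, hzz⟩ : ∃ zz, V φ _ zz := ⟨_, Vall⟩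
    refine ⟨zz, ?_⟩
    · convert hzz using 1
      simp only [hFk, hF_hA]
      rw [prod_mul_distrib, prod_div_distrib]
      congr 1
      rw [← mul_prod_erase (range e) _ (mem_range.2 hMe), hNM]
      rw [show ∀ f : ℕ → K, ∏ i ∈ range e, f i = (∏ i ∈ range (e - 1), f i) * f (e - 1) from
        fun f => by rw [← prod_range_succ, Nat.sub_add_cancel (by omega)], hDe,
        div_mul_eq_mul_div, mul_div_assoc', div_div_div_cancel_right₀ hy1]
  have Vpre : ∀ l, ∃ z, V φ (∏ i ∈ range (e * l), Fk i) z := by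
    intro l
    induction l with
    | zero => exact ⟨1, by simpa using V.one⟩
    | succ l ih =>
      obtain ⟨z, hz⟩ := ih
      obtain ⟨z', hz'⟩ := Vblock l
      refine ⟨z * z', ?_⟩
      rw [mul_add, mul_one, prod_range_add]
      exact hz.mul hz'
  have hζ1 : 1 - ζ ≠ 0 := sub_ne_zero.2 (hζ.ne_one he).symm
  have Vqint : ∀ l t, V φ (qint (2 * d * (e * l + t : ℕ) + r)) ((1 - X * (Q ^ t) ^ 2) / (1 - ζ)) := by
    intro l t
    have h : qint (2 * d * (e * l + t : ℕ) + r) =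
        (1 - qv ^ r * ((qv ^ (d : ℤ)) ^ (e * l + t)) ^ 2) / (1 - qv) := by
      rw [qint]
      congr 2
      rw [← zpow_natCast, ← zpow_natCast, ← zpow_mul, ← zpow_mul, ← zpow_add₀ hq0]
      congr 1; push_cast; ring
    rw [h]
    exact (V.one.sub (VX.mul ((VQs l t).pow 2))).div (V.one.sub Vq) hζ1
  -- partial block sum
  have Vpart : ∀ l N, M < N → N ≤ e → V φ (∑ t ∈ range N, qint (2 * d * (e * l + t : ℕ) + r) *
      ∏ i ∈ range (e * l + t), Fk i) 0 := by
    intro l N hN hNe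
    obtain ⟨z, hz⟩ := Vpre l
    have hterm : ∀ t ∈ range N, V φ (qint (2 * d * (e * l + t : ℕ) + r) *
        ∏ i ∈ range (e * l + t), Fk i)
        (z / (1 - ζ) * ((1 - X * (Q ^ t) ^ 2) * ∏ i ∈ range t, G i)) := by
      intro t ht
      have ht := mem_range.1 ht
      have h2 := V.prod (φ := φ) (range t) (x := fun i => Fk (e * l + i)) (y := G)
        (fun i hi => VF l i (by have := mem_range.1 hi; omega))
      have := (Vqint l t).mul (hz.mul h2)
      rw [prod_range_add]
      convert this using 1
      ring
    have h := V.sum _ hterm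
    rw [← mul_sum] at h
    have h0 : ∑ t ∈ range N, (1 - X * (Q ^ t) ^ 2) * ∏ i ∈ range t, G i = 0 := by
      rw [← hsum]
      symm
      apply sum_subset (range_subset_range.2 hN)
      intro t _ ht
      have ht : M < t := by simpa using ht
      have : ∏ i ∈ range t, G i = 0 := by
        apply prod_eq_zero (mem_range.2 ht)
        simp [hG, hF_hA, hXM]
      rw [this, mul_zero]
    rwa [h0, mul_zero] at h
  have Vfull : ∀ l, V φ (∑ k ∈ range (e * l), qint (2 * d * k + r) * ∏ i ∈ range k, Fk i) 0 := by
    intro l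
    induction l with
    | zero => simpa using V.zero
    | succ l ih =>
      rw [mul_add, mul_one, sum_range_add]
      have := ih.add (Vpart l e hMe le_rfl)
      rwa [add_zero] at this
  have := (Vfull s).add (Vpart s (M + 1) (by omega) (by omega))
  rw [add_zero] at this
  rw [← hms, add_assoc, sum_range_add]
  exact this

end valuePart
section reduction

def emb : Polynomial ℚ →+* R := Polynomial.eval₂RingHom MvPolynomial.C (MvPolynomial.X 0)

lemma emb_cyc (n : ℕ) : emb (Polynomial.cyclotomic n ℚ) = Phi n := rfl

lemma prime_Phi (e : ℕ) (he : 0 < e) : Prime (Phi e) := by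
  have h := (Polynomial.cyclotomic.irreducible_rat he).prime
  let s : Set (Fin 4) := {0}
  let E := MvPolynomial.uniqueAlgEquiv ℚ s
  have h2 : Prime (E.symm (Polynomial.cyclotomic e ℚ)) := (MulEquiv.prime_iff E.symm).2 h
  have h3 := (MvPolynomial.prime_rename_iff s).2 h2
  have h4 : ((MvPolynomial.rename ((↑) : s → Fin 4) : _ →ₐ[ℚ] R) : _ →+* R).comp
      (E.symm.toAlgHom : Polynomial ℚ →+* MvPolynomial s ℚ) = emb := by
    apply Polynomial.ringHom_ext
    · intro x
      simp [emb, E]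
    · simp [emb, E]
      rfl
  have h5 := congrArg (fun f => f (Polynomial.cyclotomic e ℚ)) h4
  rw [← emb_cyc, ← h5]
  exact h3

lemma qintR_eq (n : ℕ) (hn : 0 < n) : qintR n = ∏ e ∈ n.divisors.erase 1, Phi e := by
  have := congrArg emb (Polynomial.prod_cyclotomic_eq_geom_sum hn ℚ)
  rw [map_prod, map_sum] at this
  simp only [emb_cyc] at this
  rw [this, qintR]
  simp [emb]

lemma modCong_of (n : ℕ) (hn : 0 < n) (x : K)
    (h : ∀ e, e ∣ n → 1 < e → ∃ f g : R, ¬ Phi e ∣ g ∧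
      x * algebraMap R K g = algebraMap R K (Phi e * f)) : modCong (qintR n) x := by
  set u := IsFractionRing.num R x
  set v : R := ((IsFractionRing.den R x : nonZeroDivisors R) : R) with hv
  have hv0 : v ≠ 0 := nonZeroDivisors.coe_ne_zero _
  have hinj := IsFractionRing.injective R K
  have hx : x * algebraMap R K v = algebraMap R K u := by
    conv_lhs => rw [← IsFractionRing.mk'_num_den R x]
    exact IsLocalization.mk'_spec K u (IsFractionRing.den R x)
  have hdvd : qintR n ∣ u := by
    rw [qintR_eq n hn]
    apply Finset.prod_dvd_of_coprime
    · intro i _ j _ hij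
      exact (Polynomial.cyclotomic.isCoprime_rat hij).map emb
    · intro e he
      rw [mem_erase, Nat.mem_divisors] at he
      have he0 : 0 < e := Nat.pos_of_dvd_of_pos he.2.1 hn
      obtain ⟨f, g, hg, hfg⟩ := h e he.2.1 (by omega)
      have : u * g = Phi e * (f * v) := by
        apply hinj
        rw [map_mul, ← hx, mul_right_comm, hfg]
        simp only [map_mul]; ring
      have : Phi e ∣ u * g := ⟨_, this⟩
      exact ((prime_Phi e he0).dvd_or_dvd this).resolve_right hg
  obtain ⟨f, hf⟩ := hdvd
  refine ⟨f, v, hv0, ?_, by rw [hx, hf]⟩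
  intro p hp hpM hpv
  exact hp.not_isUnit (IsFractionRing.num_den_reduced R x ((hpM.trans ⟨f, hf⟩)) hpv)

lemma Phi_eval (e : ℕ) (p : Fin 4 → ℂ) :
    MvPolynomial.aeval p (Phi e) = (Polynomial.cyclotomic e ℂ).eval (p 0) := by
  rw [← Polynomial.map_cyclotomic e (algebraMap ℚ ℂ), Polynomial.eval_map, ← emb_cyc]
  have : ((MvPolynomial.aeval p : R →ₐ[ℚ] ℂ) : R →+* ℂ).comp emb =
      Polynomial.eval₂RingHom (algebraMap ℚ ℂ) (p 0) := by
    apply Polynomial.ringHom_ext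
    · intro x; simp [emb]
    · simp [emb]
  exact congrArg (fun f => f (Polynomial.cyclotomic e ℚ)) this

lemma not_dvd (e : ℕ) (he : 0 < e) (g : R) (p : Fin 4 → ℂ)
    (hp : p 0 = Complex.exp (2 * Real.pi * Complex.I / e))
    (hg : MvPolynomial.aeval p g ≠ 0) : ¬ Phi e ∣ g := by
  rintro ⟨f, rfl⟩
  apply hg
  rw [map_mul, Phi_eval, hp]
  have := (Complex.isPrimitiveRoot_exp e he.ne').isRoot_cyclotomic he
  rw [this.eq_zero, zero_mul]

lemma qv_pow_ne (j : ℕ) (hj : 0 < j) : qv ^ j ≠ 1 := by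
  intro h
  rw [qv, ← map_pow, ← map_one (algebraMap R K)] at h
  have h := IsFractionRing.injective R K h
  have := congrArg (MvPolynomial.aeval (fun _ => (0 : ℚ))) h
  simp [hj.ne'] at this

lemma term_eq (d : ℕ) (r : ℤ) (k : ℕ) :
    qint (2 * d * k + r) *
          (poch (av * qv ^ r) (qv ^ (d : ℤ)) k * poch (qv ^ r / av) (qv ^ (d : ℤ)) k *
            poch (bv * qv ^ r) (qv ^ (d : ℤ)) k * poch (qv ^ r / bv) (qv ^ (d : ℤ)) k *
            poch (qv ^ r / cv) (qv ^ (d : ℤ)) k * poch (qv ^ r) (qv ^ (d : ℤ)) k) /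
          (poch (av * qv ^ (d : ℤ)) (qv ^ (d : ℤ)) k * poch (qv ^ (d : ℤ) / av) (qv ^ (d : ℤ)) k *
            poch (bv * qv ^ (d : ℤ)) (qv ^ (d : ℤ)) k * poch (qv ^ (d : ℤ) / bv) (qv ^ (d : ℤ)) k *
            poch (cv * qv ^ (d : ℤ)) (qv ^ (d : ℤ)) k * poch (qv ^ (d : ℤ)) (qv ^ (d : ℤ)) k) *
          (cv * qv ^ (2 * d - 3 * r)) ^ k
    = qint (2 * d * k + r) *
      ∏ i ∈ range k, hF av bv cv (qv ^ r) (qv ^ (d : ℤ)) (qv ^ (2 * d - 3 * r))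
        ((qv ^ (d : ℤ)) ^ i) := by
  have : ∏ i ∈ range k, hF av bv cv (qv ^ r) (qv ^ (d : ℤ)) (qv ^ (2 * d - 3 * r))
        ((qv ^ (d : ℤ)) ^ i) = (poch (av * qv ^ r) (qv ^ (d : ℤ)) k * poch (qv ^ r / av) (qv ^ (d : ℤ)) k *
            poch (bv * qv ^ r) (qv ^ (d : ℤ)) k * poch (qv ^ r / bv) (qv ^ (d : ℤ)) k *
            poch (qv ^ r / cv) (qv ^ (d : ℤ)) k * poch (qv ^ r) (qv ^ (d : ℤ)) k) /
          (poch (av * qv ^ (d : ℤ)) (qv ^ (d : ℤ)) k * poch (qv ^ (d : ℤ) / av) (qv ^ (d : ℤ)) k *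
            poch (bv * qv ^ (d : ℤ)) (qv ^ (d : ℤ)) k * poch (qv ^ (d : ℤ) / bv) (qv ^ (d : ℤ)) k *
            poch (cv * qv ^ (d : ℤ)) (qv ^ (d : ℤ)) k * poch (qv ^ (d : ℤ)) (qv ^ (d : ℤ)) k) *
          (cv * qv ^ (2 * d - 3 * r)) ^ k := by
    unfold hF poch
    simp only [← prod_mul_distrib]
    rw [← prod_div_distrib, prod_mul_distrib (g := fun _ => cv * qv ^ (2 * d - 3 * r)),
      prod_const, card_range]
  rw [this, mul_div_assoc, mul_assoc]

lemma local_e (e : ℕ) (he : 1 < e) (d m : ℕ) (r : ℤ) (hed : Nat.Coprime d e) (hd : 0 < d)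
    (hdvd : (e : ℤ) ∣ d * m + r) :
    ∃ f g : R, ¬ Phi e ∣ g ∧ (∑ k ∈ range (m + 1), qint (2 * d * k + r) *
      ∏ i ∈ range k, hF av bv cv (qv ^ r) (qv ^ (d : ℤ)) (qv ^ (2 * d - 3 * r))
        ((qv ^ (d : ℤ)) ^ i)) * algebraMap R K g = algebraMap R K (Phi e * f) := by
  have hP := prime_Phi e (by omega)
  let I : Ideal R := Ideal.span {Phi e}
  have hI : I.IsPrime := (Ideal.span_singleton_prime hP.ne_zero).2 hP
  let L := FractionRing (R ⧸ I)
  let φ : R →+* L := (algebraMap (R ⧸ I) L).comp (Ideal.Quotient.mk I)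
  have hker : ∀ g, φ g = 0 ↔ Phi e ∣ g := by
    intro g
    rw [← Ideal.mem_span_singleton, ← Ideal.Quotient.eq_zero_iff_mem]
    exact map_eq_zero_iff _ (IsFractionRing.injective (R ⧸ I) L)
  let ψ : ℚ →+* L := φ.comp MvPolynomial.C
  have : CharZero L := charZero_of_injective_ringHom ψ.injective
  have hζ : IsPrimitiveRoot (φ (MvPolynomial.X 0)) e := by
    have : NeZero (e : L) := ⟨by rw [Nat.cast_ne_zero]; omega⟩
    rw [← Polynomial.isRoot_cyclotomic_iff, Polynomial.IsRoot.def,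
      ← Polynomial.map_cyclotomic e ψ, Polynomial.eval_map]
    have : φ (Phi e) = 0 := (hker _).2 dvd_rfl
    rw [Phi, Polynomial.hom_eval₂] at this
    exact this
  let z : ℂ := Complex.exp (2 * Real.pi * Complex.I / e)
  have h0 : ∀ i : Fin 4, i ≠ 0 → φ (MvPolynomial.X i) ≠ 0 := by
    intro i hi h
    refine not_dvd e (by omega) _ (fun j => if j = 0 then z else 1) (by simp [z]) ?_ ((hker _).1 h)
    simp [hi]
  have h1 : ∀ i : Fin 4, i ≠ 0 → φ (MvPolynomial.X i) ^ e ≠ 1 := by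
    intro i hi h
    have h' : φ (MvPolynomial.X i ^ e - 1) = 0 := by rw [map_sub, map_pow, h, map_one, sub_self]
    refine not_dvd e (by omega) _ (fun j => if j = 0 then z else 0) (by simp [z]) ?_
      ((hker _).1 h')
    have : e ≠ 0 := by omega
    simp [hi, this]
  obtain ⟨f, g, hg, hfg, hf⟩ := core (φ := φ) e d m r he hed hd hdvd hζ (h0 1 (by decide))
    (h0 2 (by decide)) (h0 3 (by decide)) (h1 1 (by decide)) (h1 2 (by decide)) (h1 3 (by decide))
    qv_pow_ne
  rw [zero_mul] at hf
  obtain ⟨f', rfl⟩ := (hker f).1 hf.symm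
  exact ⟨f', g, fun h => hg ((hker g).2 h), hfg⟩

end reduction

theorem stmt1 (n d : ℕ) (hn : 0 < n) (hd : 0 < d) (hnd : Nat.gcd n d = 1)
    (r : ℤ) (m : ℕ) (hm : m ≤ n - 1) (hmr : (d * m : ℤ) ≡ -r [ZMOD (n : ℤ)]) :
    modCong (qintR n)
      (∑ k ∈ Finset.range (m + 1),
        qint (2 * d * k + r) *
          (poch (av * qv ^ r) (qv ^ (d : ℤ)) k * poch (qv ^ r / av) (qv ^ (d : ℤ)) k *
            poch (bv * qv ^ r) (qv ^ (d : ℤ)) k * poch (qv ^ r / bv) (qv ^ (d : ℤ)) k *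
            poch (qv ^ r / cv) (qv ^ (d : ℤ)) k * poch (qv ^ r) (qv ^ (d : ℤ)) k) /
          (poch (av * qv ^ (d : ℤ)) (qv ^ (d : ℤ)) k * poch (qv ^ (d : ℤ) / av) (qv ^ (d : ℤ)) k *
            poch (bv * qv ^ (d : ℤ)) (qv ^ (d : ℤ)) k * poch (qv ^ (d : ℤ) / bv) (qv ^ (d : ℤ)) k *
            poch (cv * qv ^ (d : ℤ)) (qv ^ (d : ℤ)) k * poch (qv ^ (d : ℤ)) (qv ^ (d : ℤ)) k) *
          (cv * qv ^ (2 * d - 3 * r)) ^ k) := by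
  simp only [term_eq]
  apply modCong_of n hn
  intro e hen he
  apply local_e e he d m r _ hd
  · have h : (n : ℤ) ∣ d * m + r := by
      have := (Int.modEq_iff_dvd.1 hmr.symm)
      simpa [sub_neg_eq_add] using this
    exact (Int.natCast_dvd_natCast.2 hen).trans h
  · exact (Nat.Coprime.coprime_dvd_left hen hnd).symm

end
end

section
/- Let a, b be indeterminates, let r = 1 or r = −1, and let n > 1 and d ≥ 3 be integers with gcd(n,d) = 1 and n ≡ −r (mod d). Then for M = (dn−n−r)/d (which is an integer) and also for M = n−1, the sum over k from 0 to M of [2dk+r] · (aq^r, q^r/a, bq^r, q^r/b, q^r, q^r; q^d)_k / (aq^d, q^d/a, bq^d, q^d/b, q^d, q^d; q^d)_k · q^{(2d−3r)k} is congruent to 0 modulo [n]·Φ_n(q). -/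
open Finset

noncomputable section

/-! ### Congruences in a subring of a field -/

section Abs

variable {F : Type*} [Field F]

/-- `x` is a unit of the subring `O`. -/
def UU (O : Subring F) (x : F) : Prop := x ≠ 0 ∧ x ∈ O ∧ x⁻¹ ∈ O

/-- `x ∈ π^e O`. -/
def JJ (O : Subring F) (π : F) (e : ℕ) (x : F) : Prop := ∃ y ∈ O, x = π ^ e * y

/-- `x ≡ y` modulo `π^e`, both in `O`. -/
def CC (O : Subring F) (π : F) (e : ℕ) (x y : F) : Prop := x ∈ O ∧ y ∈ O ∧ JJ O π e (x - y)

variable {O : Subring F} {π : F} {e : ℕ} {x y x' y' : F}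

theorem UU.mul (hx : UU O x) (hy : UU O y) : UU O (x * y) :=
  ⟨mul_ne_zero hx.1 hy.1, O.mul_mem hx.2.1 hy.2.1, by
    rw [mul_inv]; exact O.mul_mem hx.2.2 hy.2.2⟩

theorem UU.inv (hx : UU O x) : UU O x⁻¹ :=
  ⟨inv_ne_zero hx.1, hx.2.2, by rw [inv_inv]; exact hx.2.1⟩

theorem UU.div (hx : UU O x) (hy : UU O y) : UU O (x / y) := by
  rw [div_eq_mul_inv]; exact hx.mul hy.inv

theorem UU.one : UU O (1 : F) := ⟨one_ne_zero, O.one_mem, by simp [O.one_mem]⟩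

theorem UU.neg (hx : UU O x) : UU O (-x) :=
  ⟨neg_ne_zero.2 hx.1, O.neg_mem hx.2.1, by rw [inv_neg]; exact O.neg_mem hx.2.2⟩

theorem UU.prod {s : Finset ℕ} {f : ℕ → F} (h : ∀ i ∈ s, UU O (f i)) : UU O (∏ i ∈ s, f i) := by
  induction s using Finset.induction_on with
  | empty => simpa using UU.one
  | insert a s ha ih =>
    rw [Finset.prod_insert ha]
    exact (h a (by simp)).mul (ih fun i hi => h i (by simp [hi]))

theorem UU.pow (hx : UU O x) (k : ℕ) : UU O (x ^ k) := by
  induction k with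
  | zero => simpa using UU.one
  | succ k ih => rw [pow_succ]; exact ih.mul hx

theorem UU.zpow (hx : UU O x) (k : ℤ) : UU O (x ^ k) := by
  cases k with
  | ofNat k => simpa using hx.pow k
  | negSucc k => rw [zpow_negSucc]; exact (hx.pow _).inv

theorem JJ.zero_mem : JJ O π e 0 := ⟨0, O.zero_mem, by simp⟩

theorem JJ.of_mem (hx : x ∈ O) : JJ O π 0 x := ⟨x, hx, by simp⟩

theorem JJ.add (hx : JJ O π e x) (hy : JJ O π e y) : JJ O π e (x + y) := by
  obtain ⟨u, hu, rfl⟩ := hx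
  obtain ⟨w, hw, rfl⟩ := hy
  exact ⟨u + w, O.add_mem hu hw, by ring⟩

theorem JJ.neg (hx : JJ O π e x) : JJ O π e (-x) := by
  obtain ⟨u, hu, rfl⟩ := hx
  exact ⟨-u, O.neg_mem hu, by ring⟩

theorem JJ.sub (hx : JJ O π e x) (hy : JJ O π e y) : JJ O π e (x - y) := by
  rw [sub_eq_add_neg]; exact hx.add hy.neg

theorem JJ.mul {e' : ℕ} (hx : JJ O π e x) (hy : JJ O π e' y) : JJ O π (e + e') (x * y) := by
  obtain ⟨u, hu, rfl⟩ := hx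
  obtain ⟨w, hw, rfl⟩ := hy
  exact ⟨u * w, O.mul_mem hu hw, by ring⟩

theorem JJ.mul_right (hx : JJ O π e x) (hy : y ∈ O) : JJ O π e (x * y) := by
  simpa using hx.mul (JJ.of_mem (π := π) hy)

theorem JJ.mul_left (hx : JJ O π e x) (hy : y ∈ O) : JJ O π e (y * x) := by
  rw [mul_comm]; exact hx.mul_right hy

theorem JJ.sum {s : Finset ℕ} {f : ℕ → F} (h : ∀ i ∈ s, JJ O π e (f i)) :
    JJ O π e (∑ i ∈ s, f i) := by
  induction s using Finset.induction_on with
  | empty => simpa using JJ.zero_mem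
  | insert a s ha ih =>
    rw [Finset.sum_insert ha]
    exact (h a (by simp)).add (ih fun i hi => h i (by simp [hi]))

theorem JJ.of_le {e' : ℕ} (hπ : π ∈ O) (he : e' ≤ e) (hx : JJ O π e x) : JJ O π e' x := by
  obtain ⟨u, hu, rfl⟩ := hx
  obtain ⟨c, rfl⟩ := Nat.exists_eq_add_of_le he
  exact ⟨π ^ c * u, O.mul_mem (O.pow_mem hπ c) hu, by ring⟩

theorem JJ.mem (hπ : π ∈ O) (hx : JJ O π e x) : x ∈ O := by
  obtain ⟨u, hu, rfl⟩ := hx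
  exact O.mul_mem (O.pow_mem hπ _) hu

theorem JJ.of_mul_unit (hy : UU O y) (hx : JJ O π e (y * x)) : JJ O π e x := by
  have := hx.mul_left hy.2.2
  rwa [inv_mul_cancel_left₀ hy.1] at this

theorem CC.refl (hx : x ∈ O) : CC O π e x x := ⟨hx, hx, by simpa using JJ.zero_mem⟩

theorem CC.symm (h : CC O π e x y) : CC O π e y x :=
  ⟨h.2.1, h.1, by simpa using h.2.2.neg⟩

theorem CC.trans {z : F} (h : CC O π e x y) (h' : CC O π e y z) : CC O π e x z :=
  ⟨h.1, h'.2.1, by simpa using h.2.2.add h'.2.2⟩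

theorem CC.add (h : CC O π e x y) (h' : CC O π e x' y') : CC O π e (x + x') (y + y') :=
  ⟨O.add_mem h.1 h'.1, O.add_mem h.2.1 h'.2.1, by
    have := h.2.2.add h'.2.2
    rwa [show x + x' - (y + y') = x - y + (x' - y') by ring]⟩

theorem CC.sub (h : CC O π e x y) (h' : CC O π e x' y') : CC O π e (x - x') (y - y') :=
  ⟨O.sub_mem h.1 h'.1, O.sub_mem h.2.1 h'.2.1, by
    have := h.2.2.sub h'.2.2
    rwa [show x - x' - (y - y') = x - y - (x' - y') by ring]⟩

theorem CC.mul (h : CC O π e x y) (h' : CC O π e x' y') : CC O π e (x * x') (y * y') :=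
  ⟨O.mul_mem h.1 h'.1, O.mul_mem h.2.1 h'.2.1, by
    have := (h.2.2.mul_right h'.1).add (h'.2.2.mul_left h.2.1)
    rwa [show x * x' - y * y' = (x - y) * x' + y * (x' - y') by ring]⟩

theorem CC.inv (h : CC O π e x y) (hx : UU O x) (hy : UU O y) : CC O π e x⁻¹ y⁻¹ :=
  ⟨hx.2.2, hy.2.2, by
    have := (h.symm.2.2.mul_right hx.2.2).mul_right hy.2.2
    have hx0 := hx.1
    have hy0 := hy.1
    rwa [show x⁻¹ - y⁻¹ = (y - x) * x⁻¹ * y⁻¹ by field_simp]⟩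

theorem CC.div (h : CC O π e x y) (h' : CC O π e x' y') (hx : UU O x') (hy : UU O y') :
    CC O π e (x / x') (y / y') := by
  rw [div_eq_mul_inv, div_eq_mul_inv]; exact h.mul (h'.inv hx hy)

theorem CC.prod {s : Finset ℕ} {f g : ℕ → F} (h : ∀ i ∈ s, CC O π e (f i) (g i)) :
    CC O π e (∏ i ∈ s, f i) (∏ i ∈ s, g i) := by
  induction s using Finset.induction_on with
  | empty => simpa using CC.refl O.one_mem
  | insert a s ha ih =>
    rw [Finset.prod_insert ha, Finset.prod_insert ha]
    exact (h a (by simp)).mul (ih fun i hi => h i (by simp [hi]))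

/-- The reflection lemma. -/
theorem CC.reflect {N : ℕ} {nn dd ee : ℕ → F} {s : F}
    (hn : ∀ i < N, UU O (nn i)) (hd : ∀ i < N, UU O (dd i)) (he : ∀ i < N, UU O (ee i))
    (h : ∀ i < N, CC O π e (nn (N - 1 - i)) (ee i * dd i))
    (hs : ∀ i < N, ee i * ee (N - 1 - i) = s) (hsU : UU O s) (k : ℕ) (hk : k ≤ N) :
    CC O π e (∏ i ∈ range (N - k), nn i / dd i)
      ((∏ i ∈ range N, ee i) * s⁻¹ ^ k * ∏ i ∈ range k, nn i / dd i) := by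
  induction k with
  | zero =>
    have h1 : CC O π e (∏ i ∈ range N, nn i) (∏ i ∈ range N, ee i * dd i) := by
      rw [← Finset.prod_range_reflect nn N]
      exact CC.prod fun i hi => h i (mem_range.1 hi)
    have hD : UU O (∏ i ∈ range N, dd i) := UU.prod fun i hi => hd i (mem_range.1 hi)
    have h2 := h1.div (CC.refl hD.2.1) hD hD
    rw [prod_mul_distrib, mul_div_cancel_right₀ _ hD.1] at h2
    simpa [prod_div_distrib] using h2
  | succ k ih =>
    have hk' : k < N := hk
    have hkk : N - 1 - k < N := by omega
    have ih := ih hk'.le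
    have e1 : N - k = (N - (k + 1)) + 1 := by omega
    have e2 : N - (k + 1) = N - 1 - k := by omega
    rw [e1, prod_range_succ, e2] at ih
    rw [e2, prod_range_succ]
    have a1 := h k hk'
    have a2 := h (N - 1 - k) hkk
    rw [show N - 1 - (N - 1 - k) = k by omega] at a2
    have b2 : CC O π e (dd (N - 1 - k)) (nn k / ee (N - 1 - k)) := by
      have := (a2.div (CC.refl (he _ hkk).2.1) (he _ hkk) (he _ hkk)).symm
      rwa [mul_div_cancel_left₀ _ (he _ hkk).1] at this
    have b3 := b2.div a1 (hn _ hkk) ((he _ hk').mul (hd _ hk'))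
    have b4 := ih.mul b3
    have hs' := hs k hk'
    have n1 := (hn _ hkk).1
    have n2 := (hd _ hkk).1
    have n3 := (he _ hkk).1
    have n4 := (he _ hk').1
    have n5 := (hd _ hk').1
    have n6 := (hn _ hk').1
    have n7 := hsU.1
    have c1 : (∏ i ∈ range (N - 1 - k), nn i / dd i) * (nn (N - 1 - k) / dd (N - 1 - k)) *
        (dd (N - 1 - k) / nn (N - 1 - k)) = ∏ i ∈ range (N - 1 - k), nn i / dd i := by
      field_simp
    rw [c1] at b4
    convert b4 using 1
    rw [pow_succ, ← hs']
    field_simp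

end Abs


/-! ### The divided difference identity -/

section DD

variable {F : Type*} [Field F]

theorem prod_erase_split (f : ℕ → F) (M k : ℕ) (hk : k ≤ M) :
    ∏ j ∈ (range (M + 1)).erase k, f j =
      (∏ j ∈ range k, f j) * ∏ i ∈ range (M - k), f (k + 1 + i) := by
  have h1 : (range (M + 1)).erase k = range k ∪ Finset.Ico (k + 1) (M + 1) := by
    ext j; simp only [mem_erase, mem_range, mem_union, Finset.mem_Ico]; omega
  have h2 : Disjoint (range k) (Finset.Ico (k + 1) (M + 1)) := by
    rw [Finset.disjoint_left]; intro j; simp only [mem_range, Finset.mem_Ico]; omega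
  rw [h1, prod_union h2, prod_Ico_eq_prod_range]
  congr 3
  omega

theorem prod_shift (f : ℕ → F) (k s : ℕ) :
    (∏ j ∈ range s, f (k + 1 + j)) * f k = (∏ j ∈ range s, f (k + j)) * f (k + s) := by
  rw [← prod_range_succ (fun j => f (k + j)), prod_range_succ']
  simp only [add_zero]
  congr 1
  exact prod_congr rfl fun j _ => by congr 1; ring

/-- ratio of consecutive very-well-poised weights -/
def gg (Q A : F) (M i : ℕ) : F :=
  (1 - A * Q ^ i) * (Q ^ M - Q ^ i) / ((1 - Q ^ (i + 1)) * (1 - A * Q ^ (M + 1 + i)))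

def vv (Q : F) (M k : ℕ) : F :=
  (∏ j ∈ range k, Q ^ j) * (∏ i ∈ range k, (1 - Q ^ (i + 1))) * Q ^ (k * (M - k)) *
    ∏ i ∈ range (M - k), (Q ^ (i + 1) - 1)

theorem vv_eq (Q : F) (M k : ℕ) (hk : k ≤ M) :
    ∏ j ∈ (range (M + 1)).erase k, (Q ^ j - Q ^ k) = vv Q M k := by
  rw [prod_erase_split _ _ _ hk, vv]
  have h1 : ∏ j ∈ range k, (Q ^ j - Q ^ k) =
      (∏ j ∈ range k, Q ^ j) * (∏ i ∈ range k, (1 - Q ^ (i + 1))) := by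
    rw [← prod_range_reflect (fun i => (1 - Q ^ (i + 1)) : ℕ → F), ← prod_mul_distrib]
    refine prod_congr rfl fun j hj => ?_
    have := mem_range.1 hj
    rw [mul_sub, mul_one, ← pow_add]
    congr 2; omega
  have h2 : ∏ i ∈ range (M - k), (Q ^ (k + 1 + i) - Q ^ k) =
      Q ^ (k * (M - k)) * ∏ i ∈ range (M - k), (Q ^ (i + 1) - 1) := by
    have : Q ^ (k * (M - k)) = ∏ i ∈ range (M - k), Q ^ k := by
      rw [prod_const, card_range, pow_mul]
    rw [this, ← prod_mul_distrib]
    exact prod_congr rfl fun j hj => by ring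
  rw [h1, h2]; ring

theorem weight_const (Q A : F) (hQ : Q ≠ 0) (M : ℕ) (h1 : ∀ k : ℕ, 1 ≤ k → 1 - Q ^ k ≠ 0)
    (hA : ∀ k : ℕ, 1 - A * Q ^ k ≠ 0) (k : ℕ) (hk : k ≤ M) :
    (∏ i ∈ range k, gg Q A M i) * vv Q M k * (∏ j ∈ range (M + 1), (1 - A * Q ^ (k + j))) * Q ^ k
      = vv Q M 0 * (∏ j ∈ range (M + 1), (1 - A * Q ^ (0 + j))) * Q ^ (k * M) := by
  induction k with
  | zero => simp
  | succ k ih =>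
    obtain ⟨l, rfl⟩ := Nat.exists_eq_add_of_le hk
    have ih := ih (by omega)
    set M := k + 1 + l with hM
    have hsh := prod_shift (fun j => 1 - A * Q ^ j) k (M + 1)
    have hv : vv Q M (k + 1) * (Q ^ (l + 1) - 1) * Q ^ (k + 1) =
        vv Q M k * (1 - Q ^ (k + 1)) * Q ^ M := by
      unfold vv
      rw [show M - (k + 1) = l by omega, show M - k = l + 1 by omega,
        prod_range_succ (fun i => Q ^ (i + 1) - 1), prod_range_succ, prod_range_succ, hM]
      ring
    rw [prod_range_succ]
    have n1 := h1 (k + 1) (by omega)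
    have n2 := hA (M + 1 + k)
    have n3 := hA k
    have n4 : Q ^ (l + 1) - 1 ≠ 0 := by
      have := h1 (l + 1) (by omega)
      intro h; apply this; linear_combination -h
    have n5 : Q ^ (k + 1) ≠ 0 := pow_ne_zero _ hQ
    have n6 : Q ^ k ≠ 0 := pow_ne_zero _ hQ
    set X := ∏ j ∈ range (M + 1), (1 - A * Q ^ (k + 1 + j))
    set Y := ∏ j ∈ range (M + 1), (1 - A * Q ^ (k + j))
    set G := ∏ i ∈ range k, gg Q A M i
    have e1 : X = Y * (1 - A * Q ^ (k + (M + 1))) / (1 - A * Q ^ k) := by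
      rw [eq_div_iff n3]; exact hsh
    have e2 : vv Q M (k + 1) =
        vv Q M k * (1 - Q ^ (k + 1)) * Q ^ M / ((Q ^ (l + 1) - 1) * Q ^ (k + 1)) := by
      rw [eq_div_iff (mul_ne_zero n4 n5), ← hv]; ring
    have e3 : Q ^ ((k + 1) * M) = Q ^ (k * M) * Q ^ M := by ring
    have e4 : Q ^ M - Q ^ k = Q ^ k * (Q ^ (l + 1) - 1) := by rw [hM]; ring
    rw [e3, ← mul_assoc, ← ih, e1, e2, gg, e4, show k + (M + 1) = M + 1 + k by ring]
    field_simp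

theorem dd_sum (Q A : F) (hQ : Q ≠ 0) (M : ℕ) (h1 : ∀ k : ℕ, 1 ≤ k → 1 - Q ^ k ≠ 0)
    (hA : ∀ k : ℕ, 1 - A * Q ^ k ≠ 0) (P : Polynomial F) (hP : P.natDegree < M) :
    ∑ k ∈ range (M + 1), (1 - A * Q ^ (2 * k)) * (∏ i ∈ range k, gg Q A M i) *
      P.eval ((Q ^ k)⁻¹ + A * Q ^ k) = 0 := by
  set x : ℕ → F := fun k => (Q ^ k)⁻¹ + A * Q ^ k with hx
  have hxx : ∀ k j, x k - x j = (Q ^ j - Q ^ k) * (1 - A * Q ^ (k + j)) / (Q ^ k * Q ^ j) := by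
    intro k j
    have := pow_ne_zero k hQ
    have := pow_ne_zero j hQ
    simp only [hx, pow_add]
    field_simp
    ring
  have hlt : ∀ k j, k < j → Q ^ k - Q ^ j ≠ 0 := by
    intro k j hkj
    obtain ⟨l, rfl⟩ := Nat.exists_eq_add_of_le hkj.le
    rw [show Q ^ k - Q ^ (k + l) = Q ^ k * (1 - Q ^ l) by ring]
    exact mul_ne_zero (pow_ne_zero _ hQ) (h1 l (by omega))
  have hne : ∀ k j, k ≠ j → Q ^ k - Q ^ j ≠ 0 := by
    intro k j hkj
    rcases lt_or_gt_of_ne hkj with h | h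
    · exact hlt k j h
    · rw [← neg_sub]; exact neg_ne_zero.2 (hlt j k h)
  have hinj : Set.InjOn x (range (M + 1) : Finset ℕ) := by
    intro k _ j _ hkj
    by_contra hne'
    have h2 : x k - x j = 0 := sub_eq_zero.2 hkj
    rw [hxx] at h2
    refine div_ne_zero (mul_ne_zero (hne j k (Ne.symm hne')) (hA _))
      (mul_ne_zero (pow_ne_zero _ hQ) (pow_ne_zero _ hQ)) h2
  have hsum := Lagrange.coeff_eq_sum (s := range (M + 1)) (v := x) hinj (P := P)
    (by
      rw [card_range]
      refine lt_of_le_of_lt Polynomial.degree_le_natDegree ?_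
      exact_mod_cast (by omega : P.natDegree < M + 1))
  rw [card_range, Nat.add_sub_cancel, Polynomial.coeff_eq_zero_of_natDegree_lt hP] at hsum
  have key : ∀ k ∈ range (M + 1), (1 - A * Q ^ (2 * k)) * (∏ i ∈ range k, gg Q A M i) *
      P.eval (x k) = (vv Q M 0 * (∏ j ∈ range (M + 1), (1 - A * Q ^ (0 + j))) /
        (∏ j ∈ range (M + 1), Q ^ j)) *
        (P.eval (x k) / ∏ j ∈ (range (M + 1)).erase k, (x k - x j)) := by
    intro k hk
    have hk' : k ≤ M := by have := mem_range.1 hk; omega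
    have hw := weight_const Q A hQ M h1 hA k hk'
    have hD : (∏ j ∈ (range (M + 1)).erase k, (x k - x j)) * (1 - A * Q ^ (2 * k)) *
        (∏ j ∈ range (M + 1), Q ^ j) * Q ^ (k * M) =
        vv Q M k * (∏ j ∈ range (M + 1), (1 - A * Q ^ (k + j))) * Q ^ k := by
      simp only [hxx, prod_div_distrib, prod_mul_distrib, vv_eq Q M k hk']
      rw [← mul_prod_erase _ (fun j => 1 - A * Q ^ (k + j)) hk,
        ← mul_prod_erase _ (fun j => Q ^ j) hk, prod_const, card_erase_of_mem hk, card_range]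
      have n1 : ∏ j ∈ (range (M + 1)).erase k, Q ^ j ≠ 0 :=
        prod_ne_zero_iff.2 fun j _ => pow_ne_zero _ hQ
      have n2 := pow_ne_zero k hQ
      rw [Nat.add_sub_cancel, ← pow_mul, show k + k = 2 * k by ring]
      have n3 := pow_ne_zero (k * M) hQ
      field_simp
    have n1 : ∏ j ∈ range (M + 1), Q ^ j ≠ 0 :=
        prod_ne_zero_iff.2 fun j _ => pow_ne_zero _ hQ
    have n2 : ∏ j ∈ (range (M + 1)).erase k, (x k - x j) ≠ 0 := by
      refine prod_ne_zero_iff.2 fun j hj => ?_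
      rw [hxx]
      exact div_ne_zero (mul_ne_zero (hne j k (ne_of_mem_erase hj)) (hA _))
        (mul_ne_zero (pow_ne_zero _ hQ) (pow_ne_zero _ hQ))
    have n3 := pow_ne_zero (k * M) hQ
    rw [div_mul_div_comm, eq_div_iff (mul_ne_zero n1 n2)]
    apply mul_right_cancel₀ n3
    linear_combination ((∏ i ∈ range k, gg Q A M i) * P.eval (x k)) * hD + P.eval (x k) * hw
  rw [sum_congr rfl key, ← mul_sum, ← hsum, mul_zero]

end DD


/-! ### The exact summation -/

section Exact

variable {F : Type*} [Field F]

def yy (Q A a : F) (j : ℕ) : F := a⁻¹ * Q ^ (j + 1) + a * A / Q ^ (j + 1)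

def pp (Q A a : F) (s : ℕ) : Polynomial F :=
  ∏ j ∈ range s, (Polynomial.X - Polynomial.C (yy Q A a j))

def hh (Q A a : F) (s i : ℕ) : F :=
  (1 - a * A * Q ^ i) * (1 - a⁻¹ * Q ^ (1 + s + i)) /
    ((1 - a⁻¹ * Q ^ (1 + i)) * (1 - a * A / Q ^ s * Q ^ i)) / Q ^ s

theorem pp_eval (Q A a : F) (hQ : Q ≠ 0) (ha : a ≠ 0) (s k : ℕ) :
    (pp Q A a s).eval ((Q ^ k)⁻¹ + A * Q ^ k) * Q ^ (k * s) =
      (∏ j ∈ range s, (1 - a⁻¹ * Q ^ (1 + (k + j)))) *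
        ∏ j ∈ range s, (1 - a * A / Q ^ s * Q ^ (k + j)) := by
  have h2 : ∏ j ∈ range s, (1 - a * A / Q ^ s * Q ^ (k + j)) =
      ∏ j ∈ range s, (1 - a * A * Q ^ k / Q ^ (j + 1)) := by
    rw [← prod_range_reflect]
    refine prod_congr rfl fun j hj => ?_
    have := mem_range.1 hj
    obtain ⟨l, rfl⟩ := Nat.exists_eq_add_of_lt this
    rw [show j + l + 1 - 1 - j = l by omega]
    field_simp
    ring
  have h3 : Q ^ (k * s) = ∏ j ∈ range s, Q ^ k := by
    rw [prod_const, card_range, pow_mul]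
  rw [h2, ← prod_mul_distrib, h3, pp, Polynomial.eval_prod, ← prod_mul_distrib]
  refine prod_congr rfl fun j _ => ?_
  simp only [Polynomial.eval_sub, Polynomial.eval_X, Polynomial.eval_C, yy]
  have := pow_ne_zero k hQ
  have := pow_ne_zero (j + 1) hQ
  field_simp
  ring

theorem hh_prod (Q A a : F) (hQ : Q ≠ 0) (ha : a ≠ 0) (s : ℕ)
    (h1 : ∀ j : ℕ, 1 - a⁻¹ * Q ^ j ≠ 0) (h2 : ∀ j : ℕ, 1 - a * A / Q ^ s * Q ^ j ≠ 0) (k : ℕ) :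
    (∏ i ∈ range k, hh Q A a s i) * (pp Q A a s).eval ((Q ^ 0)⁻¹ + A * Q ^ 0) =
      (pp Q A a s).eval ((Q ^ k)⁻¹ + A * Q ^ k) := by
  induction k with
  | zero => simp
  | succ k ih =>
    rw [prod_range_succ, mul_right_comm, ih]
    have e0 := pp_eval Q A a hQ ha s k
    have e1 := pp_eval Q A a hQ ha s (k + 1)
    have s1 := prod_shift (fun j => 1 - a⁻¹ * Q ^ (1 + j)) k s
    have s2 := prod_shift (fun j => 1 - a * A / Q ^ s * Q ^ j) k s
    have n1 := h1 (1 + k)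
    have n2 := h2 k
    have n3 := pow_ne_zero (k * s) hQ
    have n4 := pow_ne_zero s hQ
    have e2 : a * A / Q ^ s * Q ^ (k + s) = a * A * Q ^ k := by
      rw [pow_add]; field_simp
    simp only [e2] at s2
    rw [← eq_div_iff n1] at s1
    rw [← eq_div_iff n2] at s2
    rw [s1, s2] at e1
    have n5 := pow_ne_zero ((k + 1) * s) hQ
    apply mul_right_cancel₀ n5
    rw [e1, hh]
    have e3 : Q ^ ((k + 1) * s) = Q ^ (k * s) * Q ^ s := by ring
    rw [e3, show 1 + s + k = 1 + (k + s) by ring]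
    generalize (∏ j ∈ range s, (1 - a⁻¹ * Q ^ (1 + (k + j)))) = X at *
    generalize (∏ j ∈ range s, (1 - a * A / Q ^ s * Q ^ (k + j))) = Y at *
    generalize (pp Q A a s).eval ((Q ^ k)⁻¹ + A * Q ^ k) = Z at *
    generalize 1 - a⁻¹ * Q ^ (1 + k) = u1 at *
    generalize 1 - a * A / Q ^ s * Q ^ k = u2 at *
    generalize 1 - a⁻¹ * Q ^ (1 + (k + s)) = u3 at *
    generalize 1 - a * A * Q ^ k = u4 at *
    field_simp
    linear_combination u3 * u4 * e0

theorem exact_sum (Q A a b : F) (hQ : Q ≠ 0) (ha : a ≠ 0) (hb : b ≠ 0) (M s : ℕ)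
    (hs : 2 * s < M) (h1 : ∀ k : ℕ, 1 ≤ k → 1 - Q ^ k ≠ 0) (hA : ∀ k : ℕ, 1 - A * Q ^ k ≠ 0)
    (ha1 : ∀ j : ℕ, 1 - a⁻¹ * Q ^ j ≠ 0) (ha2 : ∀ j : ℕ, 1 - a * A / Q ^ s * Q ^ j ≠ 0)
    (hb1 : ∀ j : ℕ, 1 - b⁻¹ * Q ^ j ≠ 0) (hb2 : ∀ j : ℕ, 1 - b * A / Q ^ s * Q ^ j ≠ 0) :
    ∑ k ∈ range (M + 1), (1 - A * Q ^ (2 * k)) *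
      ∏ i ∈ range k, (gg Q A M i * (hh Q A a s i * hh Q A b s i)) = 0 := by
  have h := dd_sum Q A hQ M h1 hA (pp Q A a s * pp Q A b s) (by
    refine lt_of_le_of_lt Polynomial.natDegree_mul_le ?_
    have hd : ∀ c : F, (pp Q A c s).natDegree ≤ s := by
      intro c
      unfold pp
      rw [Polynomial.natDegree_prod_of_monic _ _ fun j _ => Polynomial.monic_X_sub_C _]
      simp
    have := hd a
    have := hd b
    omega)
  have nz : ∀ c : F, c ≠ 0 → (∀ j : ℕ, 1 - c⁻¹ * Q ^ j ≠ 0) →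
      (∀ j : ℕ, 1 - c * A / Q ^ s * Q ^ j ≠ 0) →
      (pp Q A c s).eval ((Q ^ 0)⁻¹ + A * Q ^ 0) ≠ 0 := by
    intro c hc k1 k2 h0
    have := pp_eval Q A c hQ hc s 0
    rw [h0, zero_mul] at this
    exact mul_ne_zero (prod_ne_zero_iff.2 fun j _ => k1 _) (prod_ne_zero_iff.2 fun j _ => k2 _)
      this.symm
  have na := nz a ha ha1 ha2
  have nb := nz b hb hb1 hb2
  apply (mul_eq_zero.1 _).resolve_right (mul_ne_zero na nb)
  rw [sum_mul, ← h]
  refine sum_congr rfl fun k _ => ?_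
  rw [Polynomial.eval_mul, ← hh_prod Q A a hQ ha s ha1 ha2 k, ← hh_prod Q A b hQ hb s hb1 hb2 k,
    prod_mul_distrib, prod_mul_distrib]
  ring

end Exact


/-! ### The sum modulo a cyclotomic polynomial -/

section Setup

variable {F : Type*} [Field F]

structure Setup (O : Subring F) (π q a b : F) (m d N : ℕ) (r : ℤ) : Prop where
  hm : 1 < m
  hπ : π ∈ O
  hπ0 : π ≠ 0
  hq : UU O q
  ha : UU O a
  hb : UU O b
  h2 : UU O (2 : F)
  hA : ∀ j : ℤ, UU O (1 - a * q ^ j)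
  hB : ∀ j : ℤ, UU O (1 - b * q ^ j)
  h1 : ∀ j : ℤ, ¬ (m : ℤ) ∣ j → UU O (1 - q ^ j)
  h0 : ∀ j : ℤ, (m : ℤ) ∣ j → j ≠ 0 → ∃ y, UU O y ∧ 1 - q ^ j = π * y
  hmd : IsCoprime (m : ℤ) (d : ℤ)
  hN : N < m
  hNd : (m : ℤ) ∣ r + d * N

def fac (a b X : F) : F :=
  (1 - a * X) * (1 - a⁻¹ * X) * (1 - b * X) * (1 - b⁻¹ * X) * (1 - X) * (1 - X)

def tn (q a b : F) (d : ℕ) (r : ℤ) (i : ℕ) : F :=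
  fac a b (q ^ (r + d * i)) * q ^ (2 * d - 3 * r)

def td (q a b : F) (d : ℕ) (i : ℕ) : F := fac a b (q ^ ((d : ℤ) * (i + 1)))

def tU (q a b : F) (d : ℕ) (r : ℤ) (k : ℕ) : F :=
  ∏ i ∈ range k, tn q a b d r i / td q a b d i

def TT (q a b : F) (d : ℕ) (r : ℤ) (k : ℕ) : F :=
  (1 - q ^ (r + 2 * d * k)) * tU q a b d r k

theorem fac_inv {a b X : F} (ha : a ≠ 0) (hb : b ≠ 0) (hX : X ≠ 0) :
    fac a b X⁻¹ = X⁻¹ ^ 6 * fac a b X := by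
  unfold fac
  field_simp
  ring

variable {O : Subring F} {π q a b : F} {m d N : ℕ} {r : ℤ}

namespace Setup


theorem qz (S : Setup O π q a b m d N r) (j : ℤ) : UU O (q ^ j) := S.hq.zpow j

theorem invA (S : Setup O π q a b m d N r) (j : ℤ) : UU O (1 - a⁻¹ * q ^ j) := by
  have h := ((S.hA (-j)).mul (S.ha.inv.mul (S.qz j))).neg
  have h1 := S.ha.1
  have h2 := S.hq.1
  have : -((1 - a * q ^ (-j)) * (a⁻¹ * q ^ j)) = 1 - a⁻¹ * q ^ j := by
    rw [zpow_neg]; field_simp; ring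
  rwa [this] at h

theorem invB (S : Setup O π q a b m d N r) (j : ℤ) : UU O (1 - b⁻¹ * q ^ j) := by
  have h := ((S.hB (-j)).mul (S.hb.inv.mul (S.qz j))).neg
  have h1 := S.hb.1
  have h2 := S.hq.1
  have : -((1 - b * q ^ (-j)) * (b⁻¹ * q ^ j)) = 1 - b⁻¹ * q ^ j := by
    rw [zpow_neg]; field_simp; ring
  rwa [this] at h

theorem one_sub_J (S : Setup O π q a b m d N r) (j : ℤ) (hj : (m : ℤ) ∣ j) : JJ O π 1 (1 - q ^ j) := by
  by_cases h : j = 0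
  · subst h; simpa using JJ.zero_mem
  · obtain ⟨y, hy, e⟩ := S.h0 j hj h
    exact ⟨y, hy.2.1, by rw [e, pow_one]⟩

theorem one_sub_mem (S : Setup O π q a b m d N r) (j : ℤ) : 1 - q ^ j ∈ O := O.sub_mem O.one_mem (S.qz j).2.1

theorem qz_congr (S : Setup O π q a b m d N r) (j j' : ℤ) (h : (m : ℤ) ∣ j' - j) : CC O π 1 (q ^ j) (q ^ j') := by
  refine ⟨(S.qz j).2.1, (S.qz j').2.1, ?_⟩
  have h1 := (S.one_sub_J _ h).mul_left (S.qz j).2.1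
  have : q ^ j * (1 - q ^ (j' - j)) = q ^ j - q ^ j' := by
    rw [mul_sub, mul_one, ← zpow_add₀ S.hq.1]; congr 2; ring
  rwa [this] at h1

theorem fac_unit (S : Setup O π q a b m d N r) (j : ℤ) (h : ¬ (m : ℤ) ∣ j) : UU O (fac a b (q ^ j)) :=
  (((((S.hA j).mul (S.invA j)).mul (S.hB j)).mul (S.invB j)).mul (S.h1 j h)).mul (S.h1 j h)

theorem fac_congr (S : Setup O π q a b m d N r) (j j' : ℤ) (h : (m : ℤ) ∣ j' - j) :
    CC O π 1 (fac a b (q ^ j)) (fac a b (q ^ j')) := by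
  have hx := S.qz_congr j j' h
  have one : CC O π 1 (1 : F) 1 := CC.refl O.one_mem
  have hc : ∀ c : F, c ∈ O → CC O π 1 (1 - c * q ^ j) (1 - c * q ^ j') := fun c hc =>
    one.sub ((CC.refl hc).mul hx)
  exact (((((hc _ S.ha.2.1).mul (hc _ S.ha.2.2)).mul (hc _ S.hb.2.1)).mul
    (hc _ S.hb.2.2)).mul (one.sub hx)).mul (one.sub hx)

theorem fac_J (S : Setup O π q a b m d N r) (j : ℤ) (h : (m : ℤ) ∣ j) : JJ O π 2 (fac a b (q ^ j)) := by
  unfold fac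
  rw [mul_assoc]
  exact ((S.one_sub_J j h).mul (S.one_sub_J j h)).mul_left
    (((S.hA j).mul (S.invA j)).mul (S.hB j) |>.mul (S.invB j)).2.1

theorem fac_mem (S : Setup O π q a b m d N r) (j : ℤ) : fac a b (q ^ j) ∈ O :=
  O.mul_mem (O.mul_mem (((S.hA j).mul (S.invA j)).mul (S.hB j) |>.mul (S.invB j)).2.1
    (S.one_sub_mem j)) (S.one_sub_mem j)

theorem ndvd_d (S : Setup O π q a b m d N r) (j : ℤ) (h : ¬ (m : ℤ) ∣ j) : ¬ (m : ℤ) ∣ d * j := fun h' =>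
  h (S.hmd.dvd_of_dvd_mul_left h')

theorem ndvd_small (S : Setup O π q a b m d N r) (j : ℤ) (h0 : 0 < j) (h1 : j < m) : ¬ (m : ℤ) ∣ j := fun h' => by
  have := Int.le_of_dvd h0 h'
  omega

theorem ndvd_r (S : Setup O π q a b m d N r) (i : ℕ) (hi : i < m) (hne : i ≠ N) : ¬ (m : ℤ) ∣ r + d * i := by
  intro h
  have h2 := dvd_sub h S.hNd
  rw [show r + (d : ℤ) * i - (r + d * N) = d * (i - N) by ring] at h2
  have h3 := S.hmd.dvd_of_dvd_mul_left h2
  have hN := S.hN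
  rcases lt_or_gt_of_ne hne with hlt | hlt
  · exact S.ndvd_small ((N : ℤ) - i) (by omega) (by omega) (by rw [← neg_sub]; exact (dvd_neg).2 h3)
  · exact S.ndvd_small ((i : ℤ) - N) (by omega) (by omega) h3

theorem tn_unit (S : Setup O π q a b m d N r) (i : ℕ) (hi : i < m) (hne : i ≠ N) : UU O (tn q a b d r i) :=
  (S.fac_unit _ (S.ndvd_r i hi hne)).mul (S.qz _)

theorem tn_mem (S : Setup O π q a b m d N r) (i : ℕ) : tn q a b d r i ∈ O := O.mul_mem (S.fac_mem _) (S.qz _).2.1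

theorem tn_N (S : Setup O π q a b m d N r) : JJ O π 2 (tn q a b d r N) := (S.fac_J _ S.hNd).mul_right (S.qz _).2.1

theorem td_unit (S : Setup O π q a b m d N r) (i : ℕ) (hi : i + 1 < m) : UU O (td q a b d i) :=
  S.fac_unit _ (S.ndvd_d _ (S.ndvd_small _ (by omega) (by omega)))

theorem tU_mem (S : Setup O π q a b m d N r) (k : ℕ) (hk : k < m) : tU q a b d r k ∈ O :=
  O.prod_mem fun i hi => by
    have := mem_range.1 hi
    rw [div_eq_mul_inv]
    exact O.mul_mem (S.tn_mem i) (S.td_unit i (by omega)).2.2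

theorem TT_mem (S : Setup O π q a b m d N r) (k : ℕ) (hk : k < m) : TT q a b d r k ∈ O :=
  O.mul_mem (S.one_sub_mem _) (S.tU_mem k hk)

theorem tU_J (S : Setup O π q a b m d N r) (k : ℕ) (hk : k < m) (hNk : N < k) : JJ O π 2 (tU q a b d r k) := by
  unfold tU
  rw [← mul_prod_erase _ _ (mem_range.2 hNk)]
  refine JJ.mul_right ?_ ?_
  · rw [div_eq_mul_inv]
    exact S.tn_N.mul_right (S.td_unit N (by omega)).2.2
  · refine O.prod_mem fun i hi => ?_
    have := mem_range.1 (mem_of_mem_erase hi)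
    rw [div_eq_mul_inv]
    exact O.mul_mem (S.tn_mem i) (S.td_unit i (by omega)).2.2

theorem TT_J (S : Setup O π q a b m d N r) (k : ℕ) (hk : k < m) (hNk : N < k) : JJ O π 2 (TT q a b d r k) :=
  (S.tU_J k hk hNk).mul_left (S.one_sub_mem _)

theorem tU_refl (S : Setup O π q a b m d N r) (k : ℕ) (hk : k ≤ N) :
    CC O π 1 (tU q a b d r (N - k)) (q ^ (2 * d * k - d * N : ℤ) * tU q a b d r k) := by
  have hN := S.hN
  have hq0 := S.hq.1
  have h := CC.reflect (O := O) (π := π) (e := 1) (N := N) (nn := tn q a b d r)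
    (dd := td q a b d) (ee := fun i => q ^ ((d : ℤ) * (3 * N - 4 - 6 * i)))
    (s := q ^ (-2 * d : ℤ))
    (fun i hi => S.tn_unit i (by omega) (by omega))
    (fun i hi => S.td_unit i (by omega)) (fun i hi => S.qz _) ?_ ?_ (S.qz _) k hk
  · have hE : ∀ K : ℕ, ∏ i ∈ range K, q ^ ((d : ℤ) * (3 * N - 4 - 6 * i)) =
        q ^ ((d : ℤ) * (3 * N * K - K - 3 * K * K)) := by
      intro K
      induction K with
      | zero => simp
      | succ K ih =>
        rw [prod_range_succ, ih, ← zpow_add₀ hq0]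
        congr 1; push_cast; ring
    rw [hE] at h
    have : q ^ ((d : ℤ) * (3 * N * N - N - 3 * N * N)) * (q ^ (-2 * d : ℤ))⁻¹ ^ k =
        q ^ (2 * d * k - d * N : ℤ) := by
      rw [← zpow_neg, ← zpow_natCast, ← zpow_mul, ← zpow_add₀ hq0]
      congr 1; ring
    rw [this] at h
    exact h
  · intro i hi
    have c1 := S.fac_congr (r + d * ((N - 1 - i : ℕ) : ℤ)) (-(d * (i + 1))) (by
      have e : ((N - 1 - i : ℕ) : ℤ) = N - 1 - i := by omega
      rw [e, show -((d : ℤ) * (i + 1)) - (r + d * (N - 1 - i)) = -(r + d * N) by ring]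
      exact (dvd_neg).2 S.hNd)
    have c2 := S.qz_congr (2 * d - 3 * r) (d * (2 + 3 * N)) (by
      rw [show (d : ℤ) * (2 + 3 * N) - (2 * d - 3 * r) = 3 * (r + d * N) by ring]
      exact dvd_mul_of_dvd_right S.hNd _)
    have c3 := c1.mul c2
    have e : fac a b (q ^ (-((d : ℤ) * (i + 1)))) * q ^ ((d : ℤ) * (2 + 3 * N)) =
        q ^ ((d : ℤ) * (3 * N - 4 - 6 * i)) * td q a b d i := by
      rw [zpow_neg, fac_inv S.ha.1 S.hb.1 (S.qz _).1, td, mul_right_comm, ← zpow_neg,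
        ← zpow_natCast, ← zpow_mul, ← zpow_add₀ hq0]
      congr 2; push_cast; ring
    rw [e] at c3
    exact c3
  · intro i hi
    rw [← zpow_add₀ hq0]
    congr 1
    have e : ((N - 1 - i : ℕ) : ℤ) = N - 1 - i := by omega
    rw [e]; ring

theorem TT_anti (S : Setup O π q a b m d N r) (k : ℕ) (hk : k ≤ N) : JJ O π 1 (TT q a b d r k + TT q a b d r (N - k)) := by
  have hq0 := S.hq.1
  have hN := S.hN
  have one : CC O π 1 (1 : F) 1 := CC.refl O.one_mem
  have h := S.tU_refl k hk
  have e : ((N - k : ℕ) : ℤ) = N - k := by omega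
  have c1 := S.qz_congr (r + 2 * d * ((N - k : ℕ) : ℤ)) (d * N - 2 * d * k) (by
    rw [e, show (d : ℤ) * N - 2 * d * k - (r + 2 * d * (N - k)) = -(r + d * N) by ring]
    exact (dvd_neg).2 S.hNd)
  have c2 := S.qz_congr (r + 2 * d * k) (2 * d * k - d * N) (by
    rw [show 2 * (d : ℤ) * k - d * N - (r + 2 * d * k) = -(r + d * N) by ring]
    exact (dvd_neg).2 S.hNd)
  have c3 := ((one.sub c2).mul (CC.refl (S.tU_mem k (by omega)))).add ((one.sub c1).mul h)
  have c4 := c3.2.2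
  have e2 : (1 - q ^ (2 * d * k - d * N : ℤ)) * tU q a b d r k +
    (1 - q ^ (d * N - 2 * d * k : ℤ)) * (q ^ (2 * d * k - d * N : ℤ) * tU q a b d r k) = 0 := by
    have : q ^ (d * N - 2 * d * k : ℤ) * q ^ (2 * d * k - d * N : ℤ) = 1 := by
      rw [← zpow_add₀ hq0]; simp
    linear_combination (-tU q a b d r k) * this
  rw [e2, sub_zero] at c4
  exact c4

theorem sum_N (S : Setup O π q a b m d N r) : JJ O π 1 (∑ k ∈ range (N + 1), TT q a b d r k) := by
  refine JJ.of_mul_unit S.h2 ?_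
  have : 2 * ∑ k ∈ range (N + 1), TT q a b d r k =
      ∑ k ∈ range (N + 1), (TT q a b d r k + TT q a b d r (N - k)) := by
    have h := Finset.sum_range_reflect (TT q a b d r) (N + 1)
    simp only [Nat.add_sub_cancel] at h
    rw [sum_add_distrib, h, two_mul]
  rw [this]
  exact JJ.sum fun k hk => S.TT_anti k (by have := mem_range.1 hk; omega)

theorem sum_tail (S : Setup O π q a b m d N r) (K : ℕ) (hK : K ≤ m) (hNK : N + 1 ≤ K) :
    JJ O π 2 (∑ k ∈ range K, TT q a b d r k - ∑ k ∈ range (N + 1), TT q a b d r k) := by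
  rw [← sum_range_add_sum_Ico _ hNK, add_sub_cancel_left]
  exact JJ.sum fun k hk => by
    have := Finset.mem_Ico.1 hk
    exact S.TT_J k (by omega) (by omega)

theorem sum_m (S : Setup O π q a b m d N r) : JJ O π 1 (∑ k ∈ range m, TT q a b d r k) := by
  have h := ((S.sum_tail m le_rfl S.hN).of_le (e' := 1) S.hπ (by omega)).add S.sum_N
  simpa using h

theorem one_sub_block_den (S : Setup O π q a b m d N r) (hd : 0 < d) (u : ℕ) :
    ∃ y, UU O y ∧ ∏ i ∈ range m, td q a b d (u * m + i) = π ^ 2 * y := by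
  obtain ⟨l, rfl⟩ : ∃ l, m = l + 1 := ⟨m - 1, by have := S.hm; omega⟩
  rw [prod_range_succ]
  have hU : UU O (∏ i ∈ range l, td q a b d (u * (l + 1) + i)) := by
    refine UU.prod fun i hi => ?_
    have hi := mem_range.1 hi
    refine S.fac_unit _ (S.ndvd_d _ fun h => ?_)
    have h3 : ((l + 1 : ℕ) : ℤ) ∣ (i : ℤ) + 1 := by
      have h4 : ((l + 1 : ℕ) : ℤ) ∣ (u : ℤ) * ((l + 1 : ℕ) : ℤ) := dvd_mul_left _ _
      have h5 := dvd_sub h h4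
      have e5 : ((u * (l + 1) + i : ℕ) : ℤ) + 1 - (u : ℤ) * ((l + 1 : ℕ) : ℤ) = (i : ℤ) + 1 := by
        push_cast; ring
      rwa [e5] at h5
    exact S.ndvd_small ((i : ℤ) + 1) (by omega) (by push_cast; omega) h3
  set j : ℤ := (d : ℤ) * (((u * (l + 1) + l : ℕ) : ℤ) + 1) with hj
  obtain ⟨y, hy, e⟩ := S.h0 j (by
    refine dvd_mul_of_dvd_right ⟨(u : ℤ) + 1, ?_⟩ _
    push_cast; ring) (by positivity)
  refine ⟨_, hU.mul ((((S.hA j).mul (S.invA j)).mul (S.hB j) |>.mul (S.invB j)).mul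
    (hy.mul hy)), ?_⟩
  unfold td at *
  rw [← hj, fac, e]
  ring

theorem tU_add (S : Setup O π q a b m d N r) (k l : ℕ) : tU q a b d r (k + l) =
    tU q a b d r k * ∏ i ∈ range l, tn q a b d r (k + i) / td q a b d (k + i) := by
  unfold tU
  exact prod_range_add _ _ _

theorem tU_block (S : Setup O π q a b m d N r) (hd : 0 < d) (u : ℕ) : tU q a b d r (u * m) ∈ O := by
  induction u with
  | zero => simp [tU, O.one_mem]
  | succ u ih =>
    rw [add_mul, one_mul, S.tU_add]
    refine O.mul_mem ih ?_
    obtain ⟨y, hy, e⟩ := S.one_sub_block_den hd u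
    have hn : JJ O π 2 (∏ i ∈ range m, tn q a b d r (u * m + i)) := by
      rw [← mul_prod_erase _ _ (mem_range.2 S.hN)]
      refine JJ.mul_right ?_ (O.prod_mem fun i _ => S.tn_mem _)
      refine (S.fac_J _ ?_).mul_right (S.qz _).2.1
      have : r + (d : ℤ) * ((u * m + N : ℕ) : ℤ) = (r + d * N) + m * (d * u) := by
        push_cast; ring
      rw [this]
      exact dvd_add S.hNd (dvd_mul_right _ _)
    obtain ⟨w, hw, e'⟩ := hn
    rw [prod_div_distrib, e, e', mul_div_mul_left _ _ (pow_ne_zero _ S.hπ0), div_eq_mul_inv]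
    exact O.mul_mem hw hy.2.2

theorem TT_block (S : Setup O π q a b m d N r) (hd : 0 < d) (u k : ℕ) (hk : k < m) :
    CC O π 1 (TT q a b d r (u * m + k)) (tU q a b d r (u * m) * TT q a b d r k) := by
  have one : CC O π 1 (1 : F) 1 := CC.refl O.one_mem
  have c1 := S.qz_congr (r + 2 * d * ((u * m + k : ℕ) : ℤ)) (r + 2 * d * k)
    ⟨-(2 * d * u), by push_cast; ring⟩
  have c2 : CC O π 1 (∏ i ∈ range k, tn q a b d r (u * m + i) / td q a b d (u * m + i))
      (tU q a b d r k) := by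
    refine CC.prod fun i hi => ?_
    have hi := mem_range.1 hi
    have hnd : ¬ (m : ℤ) ∣ (d : ℤ) * (((u * m + i : ℕ) : ℤ) + 1) := by
      refine S.ndvd_d _ fun h => ?_
      have h3 : (m : ℤ) ∣ (i : ℤ) + 1 := by
        have h4 : (m : ℤ) ∣ (u : ℤ) * m := dvd_mul_left _ _
        have h5 := dvd_sub h h4
        have e5 : ((u * m + i : ℕ) : ℤ) + 1 - (u : ℤ) * m = (i : ℤ) + 1 := by
          push_cast; ring
        rwa [e5] at h5
      exact S.ndvd_small ((i : ℤ) + 1) (by omega) (by omega) h3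
    refine CC.div ?_ ?_ (S.fac_unit _ hnd) (S.td_unit i (by omega))
    · exact (S.fac_congr _ _ ⟨-(d * u), by push_cast; ring⟩).mul (CC.refl (S.qz _).2.1)
    · exact S.fac_congr _ _ ⟨-(d * u), by push_cast; ring⟩
  have c3 := (CC.refl (π := π) (e := 1) (S.tU_block hd u)).mul ((one.sub c1).mul c2)
  have e3 : TT q a b d r (u * m + k) = tU q a b d r (u * m) *
      ((1 - q ^ (r + 2 * d * ((u * m + k : ℕ) : ℤ))) *
        ∏ i ∈ range k, tn q a b d r (u * m + i) / td q a b d (u * m + i)) := by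
    unfold TT
    rw [S.tU_add]; ring
  rw [e3]
  exact c3

theorem sum_block (S : Setup O π q a b m d N r) (hd : 0 < d) (u K : ℕ) (hK : K ≤ m)
    (h : JJ O π 1 (∑ k ∈ range K, TT q a b d r k)) :
    JJ O π 1 (∑ k ∈ range K, TT q a b d r (u * m + k)) := by
  have h1 : JJ O π 1 (∑ k ∈ range K, (TT q a b d r (u * m + k) -
      tU q a b d r (u * m) * TT q a b d r k)) :=
    JJ.sum fun k hk => (S.TT_block hd u k (by have := mem_range.1 hk; omega)).2.2
  have h2 := h1.add (h.mul_left (S.tU_block hd u))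
  rw [sum_sub_distrib, ← mul_sum] at h2
  simpa using h2

theorem sum_blocks (S : Setup O π q a b m d N r) (hd : 0 < d) (u : ℕ) : JJ O π 1 (∑ k ∈ range (u * m), TT q a b d r k) := by
  induction u with
  | zero => simpa using JJ.zero_mem
  | succ u ih =>
    rw [add_mul, one_mul, sum_range_add]
    exact ih.add (S.sum_block hd u m le_rfl S.sum_m)

theorem sum_blocks' (S : Setup O π q a b m d N r) (hd : 0 < d) (u : ℕ) :
    JJ O π 1 (∑ k ∈ range (u * m + (N + 1)), TT q a b d r k) := by
  rw [sum_range_add]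
  exact (S.sum_blocks hd u).add (S.sum_block hd u (N + 1) S.hN S.sum_N)

end Setup

end Setup


/-! ### The sum modulo the square of a cyclotomic polynomial -/

section Square

variable {F : Type*} [Field F]

def sn (q x : F) (c : ℤ) (d : ℕ) (r : ℤ) (i : ℕ) : F :=
  (1 - q ^ c * (x⁻¹ * q ^ (r + d * i))) / (1 - x⁻¹ * q ^ (r + d * i))

def sd (q x : F) (c : ℤ) (d : ℕ) (i : ℕ) : F :=
  (q ^ c - x * q ^ ((d : ℤ) * (i + 1))) / (1 - x * q ^ ((d : ℤ) * (i + 1)))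

def sg (q x : F) (c : ℤ) (d : ℕ) (r : ℤ) (k : ℕ) : F :=
  ∏ i ∈ range k, sn q x c d r i / sd q x c d i

/-- the units needed in the deformation -/
structure SU (O : Subring F) (q x : F) (c : ℤ) (d : ℕ) (r : ℤ) (i : ℕ) : Prop where
  h1 : UU O (1 - q ^ c * (x⁻¹ * q ^ (r + d * i)))
  h2 : UU O (1 - x⁻¹ * q ^ (r + d * i))
  h3 : UU O (q ^ c - x * q ^ ((d : ℤ) * (i + 1)))
  h4 : UU O (1 - x * q ^ ((d : ℤ) * (i + 1)))

variable {O : Subring F} {π q a b : F} {m d N : ℕ} {r : ℤ}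

namespace Setup

theorem sg_one (S : Setup O π q a b m d N r) {x : F} {c : ℤ} (hx : UU O x) (hc : (m : ℤ) ∣ c)
    (hU : ∀ i < N, SU O q x c d r i) (k : ℕ) (hk : k ≤ N) : CC O π 1 (sg q x c d r k) 1 := by
  have one : CC O π 1 (1 : F) 1 := CC.refl O.one_mem
  have c1 : CC O π 1 (q ^ c) 1 := by simpa using S.qz_congr c 0 (by simpa using hc)
  have h : CC O π 1 (sg q x c d r k) (∏ i ∈ range k, 1) := by
    refine CC.prod fun i hi => ?_
    have U := hU i (by have := mem_range.1 hi; omega)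
    have hB : CC O π 1 (x * q ^ ((d : ℤ) * (i + 1))) (x * q ^ ((d : ℤ) * (i + 1))) :=
      CC.refl (hx.mul (S.qz _)).2.1
    have hA : CC O π 1 (x⁻¹ * q ^ (r + d * i)) (x⁻¹ * q ^ (r + d * i)) :=
      CC.refl (hx.inv.mul (S.qz _)).2.1
    have h1 := (one.sub (c1.mul hA)).div (CC.refl U.h2.2.1) U.h2 U.h2
    rw [one_mul, div_self U.h2.1] at h1
    have h2 := (c1.sub hB).div (CC.refl U.h4.2.1) U.h4 U.h4
    rw [div_self U.h4.1] at h2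
    have h3 := h1.div h2 (U.h3.div U.h4) UU.one
    rwa [div_one] at h3
  simpa using h

theorem sg_refl (S : Setup O π q a b m d N r) {x : F} {c : ℤ} (hx : UU O x) (hc : (m : ℤ) ∣ c)
    (hU : ∀ i < N, SU O q x c d r i) (k : ℕ) (hk : k ≤ N) :
    CC O π 2 (sg q x c d r (N - k)) (sg q x c d r k) := by
  have hq0 := S.hq.1
  have h := CC.reflect (O := O) (π := π) (e := 2) (N := N) (nn := sn q x c d r)
    (dd := sd q x c d) (ee := fun _ => 1) (s := 1)
    (fun i hi => (hU i hi).h1.div (hU i hi).h2) (fun i hi => (hU i hi).h3.div (hU i hi).h4)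
    (fun _ _ => UU.one) ?_ (fun _ _ => by simp) UU.one k hk
  · simpa [sg] using h
  · intro i hi
    have U := hU i hi
    have U' := hU (N - 1 - i) (by omega)
    rw [one_mul]
    refine ⟨(U'.h1.div U'.h2).2.1, (U.h3.div U.h4).2.1, ?_⟩
    have e : ((N - 1 - i : ℕ) : ℤ) = N - 1 - i := by omega
    have hv : x⁻¹ * q ^ (r + d * ((N - 1 - i : ℕ) : ℤ)) * (x * q ^ ((d : ℤ) * (i + 1))) =
        q ^ (r + d * N) := by
      have : q ^ (r + d * ((N - 1 - i : ℕ) : ℤ)) * q ^ ((d : ℤ) * (i + 1)) = q ^ (r + d * N) := by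
        rw [← zpow_add₀ hq0, e]; congr 1; ring
      rw [← this]
      have := hx.1
      field_simp
    have hJ := ((S.one_sub_J c hc).mul (S.one_sub_J _ S.hNd)).mul_right (U'.h2.inv.mul U.h4.inv).2.1
    have n1 := U'.h2.1
    have n2 := U.h4.1
    convert hJ using 1
    rw [sn, sd, ← hv, div_sub_div _ _ n1 n2, div_eq_mul_inv, mul_inv]
    ring

theorem ne_one (S : Setup O π q a b m d N r) (j : ℤ) (hj : j ≠ 0) : 1 - q ^ j ≠ 0 := by
  by_cases h : (m : ℤ) ∣ j
  · obtain ⟨y, hy, e⟩ := S.h0 j h hj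
    rw [e]; exact mul_ne_zero S.hπ0 hy.1
  · exact (S.h1 j h).1

end Setup

theorem hfac {x : F} {s i : ℕ} {n : ℤ} (hq : q ≠ 0) (hn : n + r = d * (s + 1))
    (h2 : 1 - x⁻¹ * q ^ (r + d * i) ≠ 0) (h3 : 1 - x * q ^ ((d : ℤ) * (i + 1)) ≠ 0) :
    (1 - x * q ^ (r + d * i)) * (1 - x⁻¹ * q ^ (r + d * i)) /
      ((1 - x * q ^ ((d : ℤ) * (i + 1))) * (1 - x⁻¹ * q ^ ((d : ℤ) * (i + 1)))) *
      (sn q x n d r i / sd q x n d i) =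
    hh (q ^ (d : ℤ)) (q ^ r) x s i * q ^ ((d : ℤ) * s - n) := by
  have hp : ∀ j : ℕ, (q ^ (d : ℤ)) ^ j = q ^ ((d : ℤ) * j) := fun j => by
    rw [← zpow_natCast, ← zpow_mul]
  have e1 : x * q ^ r * q ^ ((d : ℤ) * i) = x * q ^ (r + d * i) := by
    rw [mul_assoc, ← zpow_add₀ hq]
  have e2 : x⁻¹ * q ^ ((d : ℤ) * ((1 + s + i : ℕ) : ℤ)) = q ^ n * (x⁻¹ * q ^ (r + d * i)) := by
    rw [mul_left_comm, ← zpow_add₀ hq]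
    congr 2; push_cast; linear_combination -hn
  have e3 : q ^ ((d : ℤ) * ((1 + i : ℕ) : ℤ)) = q ^ ((d : ℤ) * (i + 1)) := by
    congr 1; push_cast; ring
  have e4 : x * q ^ r / q ^ ((d : ℤ) * s) * q ^ ((d : ℤ) * i) =
      x * q ^ ((d : ℤ) * (i + 1)) / q ^ n := by
    rw [mul_div_assoc, mul_assoc, mul_div_assoc, ← zpow_sub₀ hq, ← zpow_sub₀ hq, ← zpow_add₀ hq]
    congr 2; linear_combination hn
  have e5 : q ^ n - x * q ^ ((d : ℤ) * (i + 1)) =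
      q ^ n * (1 - x * q ^ ((d : ℤ) * (i + 1)) / q ^ n) := by
    have := zpow_ne_zero n hq
    field_simp
  unfold hh sn sd
  simp only [hp]
  rw [e1, e2, e3, e4, e5, zpow_sub₀ hq]
  have n1 := zpow_ne_zero n hq
  have n2 := zpow_ne_zero ((d : ℤ) * s) hq
  generalize 1 - x * q ^ ((d : ℤ) * (i + 1)) / q ^ n = u1
  generalize 1 - x⁻¹ * q ^ (r + d * i) = u2 at *
  generalize 1 - x * q ^ ((d : ℤ) * (i + 1)) = u3 at *
  generalize 1 - q ^ n * (x⁻¹ * q ^ (r + d * i)) = u4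
  generalize 1 - x * q ^ (r + d * i) = u5
  generalize 1 - x⁻¹ * q ^ ((d : ℤ) * (i + 1)) = u6
  generalize q ^ n = u7 at *
  generalize q ^ ((d : ℤ) * s) = u8 at *
  by_cases z1 : u1 = 0
  · simp [z1]
  by_cases z6 : u6 = 0
  · simp [z6]
  field_simp

theorem gfac {M i : ℕ} {c : ℤ} (hq : q ≠ 0) (hc : c = -(r + d * M))
    (h2 : 1 - q ^ (r + d * i) ≠ 0) (h3 : 1 - q ^ ((d : ℤ) * (i + 1)) ≠ 0) :
    (1 - q ^ (r + d * i)) * (1 - q ^ (r + d * i)) /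
      ((1 - q ^ ((d : ℤ) * (i + 1))) * (1 - q ^ ((d : ℤ) * (i + 1)))) *
      (sn q 1 c d r i / sd q 1 c d i) =
    gg (q ^ (d : ℤ)) (q ^ r) M i * q ^ r := by
  have hp : ∀ j : ℕ, (q ^ (d : ℤ)) ^ j = q ^ ((d : ℤ) * j) := fun j => by
    rw [← zpow_natCast, ← zpow_mul]
  have e1 : q ^ r * q ^ ((d : ℤ) * i) = q ^ (r + d * i) := by
    rw [← zpow_add₀ hq]
  have e2 : q ^ ((d : ℤ) * M) - q ^ ((d : ℤ) * i) =
      q ^ ((d : ℤ) * M) * (1 - q ^ c * q ^ (r + d * i)) := by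
    rw [mul_sub, mul_one, ← zpow_add₀ hq, ← zpow_add₀ hq]
    congr 2; rw [hc]; ring
  have e3 : q ^ ((d : ℤ) * ((i + 1 : ℕ) : ℤ)) = q ^ ((d : ℤ) * (i + 1)) := by
    congr 1
  have e4 : q ^ c - q ^ ((d : ℤ) * (i + 1)) =
      q ^ c * (1 - q ^ r * q ^ ((d : ℤ) * ((M + 1 + i : ℕ) : ℤ))) := by
    rw [mul_sub, mul_one, ← zpow_add₀ hq, ← zpow_add₀ hq]
    congr 2; rw [hc]; push_cast; ring
  have e5 : q ^ ((d : ℤ) * M) * q ^ r * q ^ c = 1 := by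
    rw [← zpow_add₀ hq, ← zpow_add₀ hq, hc, show (d : ℤ) * M + r + -(r + d * M) = 0 by ring,
      zpow_zero]
  unfold gg sn sd
  simp only [hp, inv_one, one_mul]
  rw [e1, e2, e3, e4]
  have n1 := zpow_ne_zero c hq
  generalize 1 - q ^ r * q ^ ((d : ℤ) * ((M + 1 + i : ℕ) : ℤ)) = u1
  generalize 1 - q ^ c * q ^ (r + d * i) = u2
  generalize 1 - q ^ (r + d * i) = u3 at *
  generalize 1 - q ^ ((d : ℤ) * (i + 1)) = u4 at *
  generalize q ^ ((d : ℤ) * M) = u5 at *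
  generalize q ^ r = u6 at *
  generalize q ^ c = u7 at *
  by_cases z1 : u1 = 0
  · simp [z1]
  field_simp
  linear_combination (-u2) * e5

theorem Setup.sum_sq (S : Setup O π q a b m d N r) (hd : 3 ≤ d) (hr : ¬ (d : ℤ) ∣ r) (s : ℕ)
    (hNe : (d : ℤ) * N + r = (d - 1) * m) (hs : (m : ℤ) + r = d * (s + 1)) (hsN : 2 * s < N) :
    JJ O π 2 (∑ k ∈ range (N + 1), TT q a b d r k) := by
  have hq := S.hq.1
  have hN := S.hN
  set c : ℤ := -(r + d * N) with hc
  have hmc : (m : ℤ) ∣ c := (dvd_neg).2 S.hNd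
  have tb : ∀ x : F, UU O x → (∀ j : ℤ, UU O (1 - x * q ^ j)) → (∀ j : ℤ, UU O (1 - x⁻¹ * q ^ j)) →
      ∀ i < N, SU O q x m d r i := by
    intro x hx h h' i hi
    refine ⟨?_, h' _, ?_, h _⟩
    · rw [mul_left_comm, ← zpow_add₀ hq]; exact h' _
    · have := (S.qz m).mul (h (d * (i + 1) - m))
      rwa [mul_sub, mul_one, mul_left_comm, ← zpow_add₀ hq, add_sub_cancel] at this
  have Ua := tb a S.ha S.hA S.invA
  have Ub := tb b S.hb S.hB S.invB
  have U1 : ∀ i < N, SU O q 1 c d r i := by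
    intro i hi
    have k1 : ¬ (m : ℤ) ∣ r + d * i := S.ndvd_r i (by omega) (by omega)
    have k2 : ¬ (m : ℤ) ∣ d * (i + 1) := S.ndvd_d _ (S.ndvd_small _ (by omega) (by omega))
    refine ⟨?_, ?_, ?_, ?_⟩
    · rw [inv_one, one_mul, ← zpow_add₀ hq]
      exact S.h1 _ fun h => k1 ((dvd_add_right hmc).1 h)
    · rw [inv_one, one_mul]; exact S.h1 _ k1
    · have := (S.qz c).mul (S.h1 (d * (i + 1) - c) fun h => k2 ((dvd_sub_left hmc).1 h))
      rwa [mul_sub, mul_one, ← zpow_add₀ hq, add_sub_cancel, ← one_mul (q ^ ((d : ℤ) * (i + 1)))]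
        at this
    · rw [one_mul]; exact S.h1 _ k2
  set σ : ℕ → F := fun k => sg q a m d r k * sg q b m d r k * sg q 1 c d r k with hσ
  have hσ1 : ∀ k ≤ N, CC O π 1 (σ k) 1 := fun k hk => by
    have := ((S.sg_one S.ha dvd_rfl Ua k hk).mul (S.sg_one S.hb dvd_rfl Ub k hk)).mul
      (S.sg_one UU.one hmc U1 k hk)
    simpa using this
  have hσ2 : ∀ k ≤ N, CC O π 2 (σ (N - k)) (σ k) := fun k hk =>
    ((S.sg_refl S.ha dvd_rfl Ua k hk).mul (S.sg_refl S.hb dvd_rfl Ub k hk)).mul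
      (S.sg_refl UU.one hmc U1 k hk)
  -- the deformed sum vanishes
  have hzero : ∑ k ∈ range (N + 1), TT q a b d r k * σ k = 0 := by
    have hp : ∀ j : ℕ, (q ^ (d : ℤ)) ^ j = q ^ ((d : ℤ) * j) := fun j => by
      rw [← zpow_natCast, ← zpow_mul]
    have hx : ∀ x : F, (∀ j : ℤ, UU O (1 - x * q ^ j)) →
        ∀ j : ℕ, 1 - x * q ^ r / (q ^ (d : ℤ)) ^ s * (q ^ (d : ℤ)) ^ j ≠ 0 := by
      intro x h j
      rw [hp, hp, mul_div_assoc, mul_assoc, ← zpow_sub₀ hq, ← zpow_add₀ hq]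
      exact (h _).1
    have h := exact_sum (q ^ (d : ℤ)) (q ^ r) a b (S.qz _).1 S.ha.1 S.hb.1 N s hsN
      (fun k hk => by
        rw [hp]
        exact S.ne_one _ (by positivity))
      (fun k => by
        rw [hp, ← zpow_add₀ hq]
        refine S.ne_one _ fun h => hr ⟨-k, by linear_combination h⟩)
      (fun j => by rw [hp]; exact (S.invA _).1) (hx a S.hA)
      (fun j => by rw [hp]; exact (S.invB _).1) (hx b S.hB)
    rw [← h]
    refine sum_congr rfl fun k hk => ?_
    have hk := mem_range.1 hk
    simp only [TT, tU, hσ, sg]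
    rw [hp, ← zpow_add₀ hq, mul_assoc, ← prod_mul_distrib, ← prod_mul_distrib, ← prod_mul_distrib]
    congr 1
    · congr 2; push_cast; ring
    refine prod_congr rfl fun i hi => ?_
    have hi := mem_range.1 hi
    have ua := Ua i (by omega)
    have ub := Ub i (by omega)
    have u1 := U1 i (by omega)
    have v2 := u1.h2.1
    have v4 := u1.h4.1
    rw [inv_one, one_mul] at v2
    rw [one_mul] at v4
    have fa := hfac (x := a) (s := s) hq hs ua.h2.1 ua.h4.1
    have fb := hfac (x := b) (s := s) hq hs ub.h2.1 ub.h4.1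
    have f1 := gfac (M := N) hq hc v2 v4
    have hsc : q ^ ((d : ℤ) * s - m) * q ^ ((d : ℤ) * s - m) * q ^ r * q ^ (2 * d - 3 * r : ℤ) = 1 := by
      rw [← zpow_add₀ hq, ← zpow_add₀ hq, ← zpow_add₀ hq]
      convert zpow_zero q using 2
      linear_combination (-2) * hs
    have e : tn q a b d r i / td q a b d i *
        (sn q a m d r i / sd q a m d i * (sn q b m d r i / sd q b m d i) *
          (sn q 1 c d r i / sd q 1 c d i)) =
        (hh (q ^ (d : ℤ)) (q ^ r) a s i * q ^ ((d : ℤ) * s - m)) *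
        (hh (q ^ (d : ℤ)) (q ^ r) b s i * q ^ ((d : ℤ) * s - m)) *
        (gg (q ^ (d : ℤ)) (q ^ r) N i * q ^ r) * q ^ (2 * d - 3 * r : ℤ) := by
      rw [← fa, ← fb, ← f1, tn, td, fac, fac]
      simp only [div_eq_mul_inv, mul_inv]
      ring
    rw [e]
    linear_combination (gg (q ^ (d : ℤ)) (q ^ r) N i * hh (q ^ (d : ℤ)) (q ^ r) a s i *
      hh (q ^ (d : ℤ)) (q ^ r) b s i) * hsc
  refine JJ.of_mul_unit S.h2 ?_
  have key : 2 * ∑ k ∈ range (N + 1), TT q a b d r k =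
      ∑ k ∈ range (N + 1), ((TT q a b d r k + TT q a b d r (N - k)) * (1 - σ k) +
        TT q a b d r (N - k) * (σ k - σ (N - k))) := by
    have h := Finset.sum_range_reflect (fun k => TT q a b d r k * (1 - σ k)) (N + 1)
    simp only [Nat.add_sub_cancel] at h
    have h' : ∑ k ∈ range (N + 1), TT q a b d r k * (1 - σ k) =
        ∑ k ∈ range (N + 1), TT q a b d r k := by
      simp only [mul_sub, mul_one, sum_sub_distrib, hzero, sub_zero]
    calc 2 * ∑ k ∈ range (N + 1), TT q a b d r k
        = ∑ k ∈ range (N + 1), TT q a b d r k * (1 - σ k) +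
          ∑ k ∈ range (N + 1), TT q a b d r (N - k) * (1 - σ (N - k)) := by rw [h, h']; ring
      _ = _ := by
        rw [← sum_add_distrib]
        exact sum_congr rfl fun k _ => by ring
  rw [key]
  refine JJ.sum fun k hk => ?_
  have hk : k ≤ N := by have := mem_range.1 hk; omega
  exact ((S.TT_anti k hk).mul (hσ1 k hk).symm.2.2).add
    ((hσ2 k hk).symm.2.2.mul_left (S.TT_mem _ (by omega)))

end Square


/-! ### Specialisation at roots of unity -/

section Special

open Polynomial in
theorem Phi_eq (n : ℕ) : Phi n = Polynomial.toMvPolynomial (0 : Fin 4) (cyclotomic n ℚ) := by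
  unfold Phi Polynomial.toMvPolynomial
  rw [Polynomial.aeval_def]
  rfl

/-- evaluation of polynomials at `q = z`, `a = b = 2` -/
def ev (z : ℂ) : R →+* ℂ :=
  MvPolynomial.eval₂Hom (algebraMap ℚ ℂ) (fun i => if i = 0 then z else 2)

theorem ev_q (z : ℂ) : ev z (MvPolynomial.X 0) = z := by simp [ev]
theorem ev_a (z : ℂ) : ev z (MvPolynomial.X 1) = 2 := by simp [ev]
theorem ev_b (z : ℂ) : ev z (MvPolynomial.X 2) = 2 := by simp [ev]

theorem ev_Phi (z : ℂ) (n : ℕ) : ev z (Phi n) = (Polynomial.cyclotomic n ℂ).eval z := by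
  unfold Phi
  rw [Polynomial.hom_eval₂, ev_q, ← Polynomial.map_cyclotomic n (algebraMap ℚ ℂ),
    Polynomial.eval_map]
  congr 1
  exact RingHom.ext_rat _ _

theorem ev_Phi_self {z : ℂ} {m : ℕ} (hm : 0 < m) (hz : IsPrimitiveRoot z m) : ev z (Phi m) = 0 := by
  rw [ev_Phi]
  exact hz.isRoot_cyclotomic hm

theorem ev_Phi_ne {z : ℂ} {m e : ℕ} (he : 0 < e) (hz : IsPrimitiveRoot z m) (hne : e ≠ m) :
    ev z (Phi e) ≠ 0 := by
  rw [ev_Phi]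
  intro h
  have : NeZero (e : ℂ) := ⟨by exact_mod_cast he.ne'⟩
  have h2 := Polynomial.isRoot_cyclotomic_iff.1 h
  exact hne (h2.unique hz)

theorem Phi_prime {m : ℕ} (hm : 0 < m) : Prime (Phi m) := by
  have h1 : Prime (Polynomial.cyclotomic m ℚ) :=
    (Polynomial.cyclotomic.irreducible_rat hm).prime
  have h2 : Phi m = MvPolynomial.rename ((↑) : ({0} : Set (Fin 4)) → Fin 4)
      ((MvPolynomial.uniqueAlgEquiv ℚ ({0} : Set (Fin 4))).symm
        (Polynomial.cyclotomic m ℚ)) := by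
    have h3 : Polynomial.toMvPolynomial (R := ℚ) (0 : Fin 4) =
        (MvPolynomial.rename ((↑) : ({0} : Set (Fin 4)) → Fin 4)).comp
          ((MvPolynomial.uniqueAlgEquiv ℚ ({0} : Set (Fin 4))).symm :
            Polynomial ℚ →ₐ[ℚ] MvPolynomial ({0} : Set (Fin 4)) ℚ) := by
      ext
      simp
    rw [Phi_eq, h3]
    rfl
  rw [h2, MvPolynomial.prime_rename_iff]
  exact (MulEquiv.prime_iff (MvPolynomial.uniqueAlgEquiv ℚ ({0} : Set (Fin 4))).symm).2 h1

/-- The local ring at the point `q = z`, `a = b = 2`. -/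
def OO (z : ℂ) : Subring K where
  carrier := {x | ∃ f g : R, ev z g ≠ 0 ∧ x * algebraMap R K g = algebraMap R K f}
  one_mem' := ⟨1, 1, by simp, by simp⟩
  zero_mem' := ⟨0, 1, by simp, by simp⟩
  mul_mem' := by
    rintro x y ⟨f, g, h, e⟩ ⟨f', g', h', e'⟩
    refine ⟨f * f', g * g', by rw [map_mul]; exact mul_ne_zero h h', ?_⟩
    rw [map_mul, map_mul, ← e, ← e']; ring
  add_mem' := by
    rintro x y ⟨f, g, h, e⟩ ⟨f', g', h', e'⟩
    refine ⟨f * g' + f' * g, g * g', by rw [map_mul]; exact mul_ne_zero h h', ?_⟩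
    rw [map_mul, map_add, map_mul, map_mul, ← e, ← e']; ring
  neg_mem' := by
    rintro x ⟨f, g, h, e⟩
    exact ⟨-f, g, h, by rw [map_neg, ← e]; ring⟩

theorem OO_map (z : ℂ) (f : R) : algebraMap R K f ∈ OO z := ⟨f, 1, by simp, by simp⟩

theorem map_ne {f : R} (hf : f ≠ 0) : algebraMap R K f ≠ 0 := by
  simpa using hf

theorem UU_map {z : ℂ} {f : R} (hf : ev z f ≠ 0) : UU (OO z) (algebraMap R K f) := by
  have h0 : f ≠ 0 := by rintro rfl; simp at hf
  have h1 := map_ne h0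
  exact ⟨h1, OO_map z f, 1, f, hf, by rw [inv_mul_cancel₀ h1, map_one]⟩

theorem qpow_sub (k : ℕ) : (1 : K) - qv ^ k = algebraMap R K (1 - MvPolynomial.X 0 ^ k) := by
  simp [qv]

theorem one_sub_Phi {k : ℕ} (hk : 0 < k) :
    (1 : R) - MvPolynomial.X 0 ^ k = - ∏ e ∈ k.divisors, Phi e := by
  have h := Polynomial.prod_cyclotomic_eq_X_pow_sub_one hk ℚ
  have h2 := congrArg (Polynomial.eval₂ (MvPolynomial.C : ℚ →+* R) (MvPolynomial.X 0)) h
  rw [Polynomial.eval₂_finsetProd] at h2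
  simp only [Phi]
  rw [h2]
  simp

theorem setup_special {n m d M₀ : ℕ} {r : ℤ} (hm : 1 < m) (hnd : Nat.gcd n d = 1) (hmn : m ∣ n)
    (hM : (d : ℤ) * M₀ = (d - 1) * n - r) {z : ℂ} (hz : IsPrimitiveRoot z m) :
    Setup (OO z) (algebraMap R K (Phi m)) qv av bv m d (M₀ % m) r := by
  have hz0 : z ≠ 0 := hz.ne_zero (by omega)
  have hzn : ‖z‖ = 1 := hz.norm'_eq_one (by omega)
  have hq : UU (OO z) qv := UU_map (by rw [ev_q]; exact hz0)
  have hAB : ∀ (i : Fin 4), i ≠ 0 → ∀ j : ℤ,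
      UU (OO z) (1 - algebraMap R K (MvPolynomial.X i) * qv ^ j) := by
    intro i hi j
    have hei : ev z (MvPolynomial.X i) = 2 := by simp [ev, hi]
    obtain ⟨k, rfl | rfl⟩ := j.eq_nat_or_neg
    · have : (1 - algebraMap R K (MvPolynomial.X i) * qv ^ (k : ℤ)) =
          algebraMap R K (1 - MvPolynomial.X i * MvPolynomial.X 0 ^ k) := by
        simp [qv]
      rw [this]
      apply UU_map
      rw [map_sub, map_mul, map_pow, ev_q, hei, map_one]
      intro h
      have h2 : ‖(2 : ℂ) * z ^ k‖ = 1 := by rw [← sub_eq_zero.1 h]; simp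
      rw [norm_mul, norm_pow, hzn] at h2
      norm_num at h2
    · have : (1 - algebraMap R K (MvPolynomial.X i) * qv ^ (-(k : ℤ))) =
          qv ^ (-(k : ℤ)) * algebraMap R K (MvPolynomial.X 0 ^ k - MvPolynomial.X i) := by
        have := hq.1
        rw [map_sub, map_pow, zpow_neg, zpow_natCast]
        change _ = _ * (qv ^ k - _)
        field_simp
      rw [this]
      refine (hq.zpow _).mul (UU_map ?_)
      rw [map_sub, map_pow, ev_q, hei]
      intro h
      have h2 : ‖z ^ k‖ = ‖(2 : ℂ)‖ := by rw [← sub_eq_zero.1 h]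
      rw [norm_pow, hzn] at h2
      norm_num at h2
  have hneg : ∀ k : ℕ, (1 : K) - qv ^ (-(k : ℤ)) = -qv ^ (-(k : ℤ)) * (1 - qv ^ k) := by
    intro k
    have := hq.1
    rw [zpow_neg, zpow_natCast]
    field_simp
    ring
  have h1 : ∀ k : ℕ, ¬ m ∣ k → UU (OO z) (1 - qv ^ k) := by
    intro k hk
    rw [qpow_sub]
    apply UU_map
    rw [map_sub, map_pow, ev_q, map_one]
    intro h
    exact hk (hz.dvd_of_pow_eq_one k (sub_eq_zero.1 h).symm)
  have h0 : ∀ k : ℕ, m ∣ k → k ≠ 0 → ∃ y, UU (OO z) y ∧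
      1 - qv ^ k = algebraMap R K (Phi m) * y := by
    intro k hk hk0
    refine ⟨algebraMap R K (-∏ e ∈ k.divisors.erase m, Phi e), UU_map ?_, ?_⟩
    · rw [map_neg, map_prod]
      refine neg_ne_zero.2 (prod_ne_zero_iff.2 fun e he => ?_)
      rw [mem_erase] at he
      exact ev_Phi_ne (Nat.pos_of_mem_divisors he.2) hz he.1
    · rw [qpow_sub, one_sub_Phi (by omega), ← map_mul, mul_neg,
        mul_prod_erase _ _ (Nat.mem_divisors.2 ⟨hk, hk0⟩)]
  refine
    { hm := hm
      hπ := OO_map _ _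
      hπ0 := map_ne (Phi_prime (by omega)).ne_zero
      hq := hq
      ha := UU_map (by rw [ev_a]; norm_num)
      hb := UU_map (by rw [ev_b]; norm_num)
      h2 := by
        have := UU_map (z := z) (f := 2) (by rw [map_ofNat]; norm_num)
        rwa [map_ofNat] at this
      hA := hAB 1 (by decide)
      hB := hAB 2 (by decide)
      h1 := ?_
      h0 := ?_
      hmd := ?_
      hN := Nat.mod_lt _ (by omega)
      hNd := ?_ }
  · intro j hj
    obtain ⟨k, rfl | rfl⟩ := j.eq_nat_or_neg
    · rw [zpow_natCast]
      exact h1 k (by exact_mod_cast hj)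
    · rw [hneg]
      exact (hq.zpow _).neg.mul (h1 k (by rw [dvd_neg] at hj; exact_mod_cast hj))
  · intro j hj hj0
    obtain ⟨k, rfl | rfl⟩ := j.eq_nat_or_neg
    · rw [zpow_natCast]
      exact h0 k (by exact_mod_cast hj) (by simpa using hj0)
    · rw [hneg]
      obtain ⟨y, hy, e⟩ := h0 k (by rw [dvd_neg] at hj; exact_mod_cast hj) (by simpa using hj0)
      exact ⟨-qv ^ (-(k : ℤ)) * y, (hq.zpow _).neg.mul hy, by rw [e]; ring⟩
  · rw [Nat.isCoprime_iff_coprime]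
    exact Nat.Coprime.coprime_dvd_left hmn hnd
  · have e := Nat.mod_add_div M₀ m
    have e' : ((M₀ % m : ℕ) : ℤ) = M₀ - m * (M₀ / m : ℕ) := by
      rw [eq_sub_iff_add_eq]; exact_mod_cast e
    obtain ⟨c, rfl⟩ := hmn
    refine ⟨(d - 1) * c - d * (M₀ / m : ℕ), ?_⟩
    rw [e']
    push_cast at hM ⊢
    linear_combination hM

/-- Membership in the ideal generated by a power of `Phi m`, in terms of numerators. -/
theorem JJ.num_dvd {m e : ℕ} (hm : 1 < m) {z : ℂ} (hz : IsPrimitiveRoot z m) {x : K}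
    (h : JJ (OO z) (algebraMap R K (Phi m)) e x) : Phi m ^ e ∣ IsFractionRing.num R x := by
  obtain ⟨y, ⟨f, g, hg, e1⟩, rfl⟩ := h
  set x := algebraMap R K (Phi m) ^ e * y
  have hp := Phi_prime (m := m) (by omega)
  have hpg : ¬ Phi m ∣ g := by
    rintro ⟨c, rfl⟩
    rw [map_mul, ev_Phi_self (by omega) hz, zero_mul] at hg
    exact hg rfl
  have h1 : x * algebraMap R K (IsFractionRing.den R x : R) =
      algebraMap R K (IsFractionRing.num R x) := by
    have h := IsFractionRing.mk'_num_den' R x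
    have h0 : algebraMap R K (IsFractionRing.den R x : R) ≠ 0 :=
      map_ne (nonZeroDivisors.ne_zero (IsFractionRing.den R x).2)
    rw [div_eq_iff h0] at h
    exact h.symm
  have h2 : IsFractionRing.num R x * g = Phi m ^ e * (f * (IsFractionRing.den R x : R)) := by
    apply IsFractionRing.injective R K
    rw [map_mul, ← h1, map_mul, map_mul, map_pow, ← e1]
    ring
  exact hp.pow_dvd_of_dvd_mul_right e hpg ⟨_, h2⟩

theorem modCong_of_s3 {n : ℕ} (hn : 1 < n) {x : K}
    (h : ∀ m, 1 < m → m ∣ n → Phi m ^ (if m = n then 2 else 1) ∣ IsFractionRing.num R x) :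
    modCong (qintR n * Phi n) x := by
  have hq : qintR n * Phi n = ∏ m ∈ n.divisors.erase 1, Phi m ^ (if m = n then 2 else 1) := by
    have h1 := Polynomial.prod_cyclotomic_eq_geom_sum (by omega : 0 < n) ℚ
    have h2 := congrArg (Polynomial.eval₂ (MvPolynomial.C : ℚ →+* R) (MvPolynomial.X 0)) h1
    rw [Polynomial.eval₂_finsetProd] at h2
    have h3 : qintR n = ∏ m ∈ n.divisors.erase 1, Phi m := by
      simp only [Phi, qintR]
      rw [h2]
      simp [Polynomial.eval₂_finsetSum]
    have hnm : n ∈ n.divisors.erase 1 := by simp; omega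
    rw [h3, ← mul_prod_erase _ _ hnm, ← mul_prod_erase _ (fun m => Phi m ^ _) hnm, if_pos rfl]
    have : ∏ m ∈ (n.divisors.erase 1).erase n, Phi m ^ (if m = n then 2 else 1) =
        ∏ m ∈ (n.divisors.erase 1).erase n, Phi m :=
      prod_congr rfl fun m hm => by rw [if_neg (mem_erase.1 hm).1, pow_one]
    rw [this]
    ring
  have hdvd : qintR n * Phi n ∣ IsFractionRing.num R x := by
    rw [hq]
    refine Finset.prod_dvd_of_isRelPrime ?_ ?_
    · intro i hi j hj hij
      simp only [coe_erase, Set.mem_sdiff, Finset.mem_coe, Nat.mem_divisors] at hi hj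
      have hi0 : 0 < i := Nat.pos_of_dvd_of_pos hi.1.1 (by omega)
      have hj0 : 0 < j := Nat.pos_of_dvd_of_pos hj.1.1 (by omega)
      refine IsRelPrime.pow ?_
      refine ((Phi_prime hi0).irreducible.isRelPrime_iff_not_dvd).2 ?_
      rintro ⟨c, hc⟩
      have hz := Complex.isPrimitiveRoot_exp i hi0.ne'
      have := ev_Phi_ne hj0 hz (Ne.symm hij)
      rw [hc, map_mul, ev_Phi_self hi0 hz, zero_mul] at this
      exact this rfl
    · intro m hm
      simp only [mem_erase, Nat.mem_divisors] at hm
      have := Nat.pos_of_dvd_of_pos hm.2.1 (by omega)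
      exact h m (by omega) hm.2.1
  obtain ⟨f, hf⟩ := hdvd
  refine ⟨f, IsFractionRing.den R x, nonZeroDivisors.ne_zero (IsFractionRing.den R x).2, ?_, ?_⟩
  · intro p hp hpM hpg
    exact hp.not_isUnit (IsFractionRing.num_den_reduced R x (hpM.trans ⟨f, hf⟩) hpg)
  · rw [← hf]
    have h := IsFractionRing.mk'_num_den' R x
    have h0 : algebraMap R K (IsFractionRing.den R x : R) ≠ 0 :=
      map_ne (nonZeroDivisors.ne_zero (IsFractionRing.den R x).2)
    rw [div_eq_iff h0] at h
    exact h.symm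

end Special


/-! ### The final assembly -/

theorem fac_split {F : Type*} [Field F] (a b X Y : F) : fac a b (X * Y) =
    (1 - a * X * Y) * (1 - X / a * Y) * (1 - b * X * Y) * (1 - X / b * Y) * (1 - X * Y) *
      (1 - X * Y) := by
  have e1 : X / a * Y = a⁻¹ * (X * Y) := by rw [div_eq_mul_inv]; ring
  have e2 : X / b * Y = b⁻¹ * (X * Y) := by rw [div_eq_mul_inv]; ring
  unfold fac
  rw [e1, e2, mul_assoc a, mul_assoc b]

theorem combine_aux {F : Type*} [Field F] (u v A B C : F) :
    u / v * A / B * C = v⁻¹ * (u * (A * C / B)) := by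
  simp only [div_eq_mul_inv]
  ring

theorem summand_eq (d : ℕ) (r : ℤ) (k : ℕ) (hq : qv ≠ 0) :
    qint (2 * d * k + r) *
          (poch (av * qv ^ r) (qv ^ (d : ℤ)) k * poch (qv ^ r / av) (qv ^ (d : ℤ)) k *
            poch (bv * qv ^ r) (qv ^ (d : ℤ)) k * poch (qv ^ r / bv) (qv ^ (d : ℤ)) k *
            poch (qv ^ r) (qv ^ (d : ℤ)) k * poch (qv ^ r) (qv ^ (d : ℤ)) k) /
          (poch (av * qv ^ (d : ℤ)) (qv ^ (d : ℤ)) k * poch (qv ^ (d : ℤ) / av) (qv ^ (d : ℤ)) k *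
            poch (bv * qv ^ (d : ℤ)) (qv ^ (d : ℤ)) k * poch (qv ^ (d : ℤ) / bv) (qv ^ (d : ℤ)) k *
            poch (qv ^ (d : ℤ)) (qv ^ (d : ℤ)) k * poch (qv ^ (d : ℤ)) (qv ^ (d : ℤ)) k) *
          qv ^ ((2 * d - 3 * r) * k) = (1 - qv)⁻¹ * TT qv av bv d r k := by
  have h1 : ∀ (s : ℤ) (i : ℕ), qv ^ (s + d * i) = qv ^ s * (qv ^ (d : ℤ)) ^ i := by
    intro s i
    rw [zpow_add₀ hq, zpow_mul, zpow_natCast]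
  have h2 : tU qv av bv d r k =
      (poch (av * qv ^ r) (qv ^ (d : ℤ)) k * poch (qv ^ r / av) (qv ^ (d : ℤ)) k *
            poch (bv * qv ^ r) (qv ^ (d : ℤ)) k * poch (qv ^ r / bv) (qv ^ (d : ℤ)) k *
            poch (qv ^ r) (qv ^ (d : ℤ)) k * poch (qv ^ r) (qv ^ (d : ℤ)) k) *
          qv ^ ((2 * d - 3 * r) * k) /
          (poch (av * qv ^ (d : ℤ)) (qv ^ (d : ℤ)) k * poch (qv ^ (d : ℤ) / av) (qv ^ (d : ℤ)) k *
            poch (bv * qv ^ (d : ℤ)) (qv ^ (d : ℤ)) k * poch (qv ^ (d : ℤ) / bv) (qv ^ (d : ℤ)) k *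
            poch (qv ^ (d : ℤ)) (qv ^ (d : ℤ)) k * poch (qv ^ (d : ℤ)) (qv ^ (d : ℤ)) k) := by
    have h3 : qv ^ ((2 * (d : ℤ) - 3 * r) * k) = ∏ i ∈ range k, qv ^ (2 * (d : ℤ) - 3 * r) := by
      rw [prod_const, card_range, zpow_mul, zpow_natCast]
    rw [h3]
    unfold poch tU
    simp only [← prod_mul_distrib, ← prod_div_distrib]
    refine prod_congr rfl fun i _ => ?_
    unfold tn td
    have h4 : qv ^ ((d : ℤ) * (i + 1)) = qv ^ (d : ℤ) * (qv ^ (d : ℤ)) ^ i := by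
      rw [← h1]; congr 1; ring
    rw [h4, h1, fac_split, fac_split]
  unfold TT
  rw [h2, qint, add_comm (2 * (d : ℤ) * k) r]
  exact combine_aux _ _ _ _ _

theorem stmt3 (r : ℤ) (hr : r = 1 ∨ r = -1) (n d : ℕ) (hn : 1 < n) (hd : 3 ≤ d)
    (hnd : Nat.gcd n d = 1) (hmod : (n : ℤ) ≡ -r [ZMOD (d : ℤ)])
    (M : ℕ) (hM : (M : ℤ) = ((d : ℤ) * n - n - r) / d ∨ M = n - 1) :
    modCong (qintR n * Phi n)
      (∑ k ∈ Finset.range (M + 1),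
        qint (2 * d * k + r) *
          (poch (av * qv ^ r) (qv ^ (d : ℤ)) k * poch (qv ^ r / av) (qv ^ (d : ℤ)) k *
            poch (bv * qv ^ r) (qv ^ (d : ℤ)) k * poch (qv ^ r / bv) (qv ^ (d : ℤ)) k *
            poch (qv ^ r) (qv ^ (d : ℤ)) k * poch (qv ^ r) (qv ^ (d : ℤ)) k) /
          (poch (av * qv ^ (d : ℤ)) (qv ^ (d : ℤ)) k * poch (qv ^ (d : ℤ) / av) (qv ^ (d : ℤ)) k *
            poch (bv * qv ^ (d : ℤ)) (qv ^ (d : ℤ)) k * poch (qv ^ (d : ℤ) / bv) (qv ^ (d : ℤ)) k *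
            poch (qv ^ (d : ℤ)) (qv ^ (d : ℤ)) k * poch (qv ^ (d : ℤ)) (qv ^ (d : ℤ)) k) *
          qv ^ ((2 * d - 3 * r) * k)) := by
  have hq0 : qv ≠ 0 := map_ne (MvPolynomial.X_ne_zero 0)
  rw [sum_congr rfl fun k _ => summand_eq d r k hq0, ← mul_sum]
  -- arithmetic
  have hdr : ¬ (d : ℤ) ∣ r := by
    intro h
    rcases hr with rfl | rfl
    · have := Int.le_of_dvd one_pos h
      omega
    · rw [dvd_neg] at h
      have := Int.le_of_dvd one_pos h
      omega
  have hdn : (d : ℤ) ∣ n + r := by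
    have := (Int.modEq_iff_dvd.1 hmod.symm)
    rwa [sub_neg_eq_add] at this
  obtain ⟨t, ht⟩ := hdn
  have hd3 : (3 : ℤ) ≤ d := by exact_mod_cast hd
  have ht1 : 1 ≤ t := by
    by_contra hc
    have : (d : ℤ) * t ≤ 0 := mul_nonpos_of_nonneg_of_nonpos (by omega) (by omega)
    rcases hr with rfl | rfl <;> omega
  have ht3 : 3 * t ≤ n + r := by rw [ht]; exact mul_le_mul_of_nonneg_right hd3 (by omega)
  obtain ⟨s, hs⟩ : ∃ s : ℕ, (s : ℤ) + 1 = t := ⟨(t - 1).toNat, by omega⟩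
  have htn : t < n := by rcases hr with rfl | rfl <;> omega
  obtain ⟨M₀, hM₀⟩ : ∃ M₀ : ℕ, (M₀ : ℤ) = n - t := ⟨((n : ℤ) - t).toNat, by omega⟩
  have hdM : (d : ℤ) * M₀ = (d - 1) * n - r := by rw [hM₀]; linear_combination ht
  have hM' : M = M₀ ∨ M = n - 1 := by
    rcases hM with h | h
    · left
      have : ((d : ℤ) * n - n - r) = d * M₀ := by rw [hdM]; ring
      rw [this, Int.mul_ediv_cancel_left _ (by omega)] at h
      exact_mod_cast h
    · exact Or.inr h
  have hM₀n : M₀ < n := by omega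
  have hsM : 2 * s < M₀ := by rcases hr with rfl | rfl <;> omega
  refine modCong_of_s3 hn fun m hm hmn => ?_
  have hz := Complex.isPrimitiveRoot_exp m (by omega)
  refine JJ.num_dvd hm hz ?_
  have S := setup_special hm hnd hmn hdM hz
  have hinv : (1 - qv)⁻¹ ∈ OO (Complex.exp (2 * Real.pi * Complex.I / m)) := by
    have h := (S.h1 1 (by
      intro h
      have := Int.le_of_dvd one_pos h
      omega)).2.2
    rwa [zpow_one] at h
  refine JJ.mul_left ?_ hinv
  by_cases hmn' : m = n
  · subst hmn'
    rw [if_pos rfl]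
    rw [Nat.mod_eq_of_lt hM₀n] at S
    have h2 := S.sum_sq hd hdr s (by linear_combination hdM) (by rw [hs, ht]) hsM
    rcases hM' with rfl | rfl
    · exact h2
    · have h3 := S.sum_tail m le_rfl (by omega)
      rw [Nat.sub_add_cancel (by omega)]
      have := h3.add h2
      rwa [sub_add_cancel] at this
  · rw [if_neg hmn']
    rcases hM' with rfl | rfl
    · have h := S.sum_blocks' (by omega) (M / m)
      have e : M / m * m + (M % m + 1) = M + 1 := by
        have := Nat.div_add_mod' M m
        omega
      rwa [e] at h
    · obtain ⟨c, rfl⟩ := hmn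
      have h := S.sum_blocks (by omega) c
      rw [Nat.sub_add_cancel (by omega), mul_comm m c]
      exact h

end
end
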